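/- arXiv:1707.09793 — 3 statements merged into one kernel-verified Lean document; each statement's English description precedes it below -/
import Mathlib

section
/- Let M be a finitely generated inverse monoid. Then M is finite if and only if M is permutable and every finitely generated subgroup of M is periodic. -/
/-- A semigroup/monoid `M` is `n`-permutable: for every sequence of `n` elements there is a
non-identity permutation `σ` of `{1,…,n}` leaving the product unchanged. -/
def NPermutable (M : Type) [Monoid M] (n : ℕ) : Prop :=
  ∀ s : Fin n → M, ∃ σ : Equiv.Perm (Fin n), σ ≠ 1 ∧
    (List.ofFn s).prod = (List.ofFn fun i => s (σ i)).prod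

/-- `M` is permutable if it is `n`-permutable for some `n ≥ 2`. -/
def Permutable (M : Type) [Monoid M] : Prop :=
  ∃ n : ℕ, 2 ≤ n ∧ NPermutable M n

/-- `M` is an inverse monoid: every element has a unique inverse in the sense of
inverse semigroup theory. -/
def IsInverseMonoid (M : Type) [Monoid M] : Prop :=
  ∀ m : M, ∃! m' : M, m * m' * m = m ∧ m' * m * m' = m'

/-- A subsemigroup `S` of a monoid `M` is a subgroup of `M` if it is a group under the
induced operation (its identity need not be the identity of `M`). -/
def IsSubgroupOfMonoid {M : Type} [Monoid M] (S : Subsemigroup M) : Prop :=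
  ∃ e ∈ S, (∀ x ∈ S, e * x = x ∧ x * e = x) ∧ ∀ x ∈ S, ∃ y ∈ S, x * y = e ∧ y * x = e

/-- A subsemigroup is finitely generated if it is the closure of a finite subset. -/
def SubsemigroupFG {M : Type} [Monoid M] (S : Subsemigroup M) : Prop :=
  ∃ T : Finset M, Subsemigroup.closure (T : Set M) = S

/-- An element `s` is periodic if `s^i = s^j` for some `1 ≤ i < j`. -/
def IsPeriodicElem {M : Type} [Monoid M] (s : M) : Prop :=
  ∃ i j : ℕ, 1 ≤ i ∧ i < j ∧ s ^ i = s ^ j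

/-!
In an inverse monoid, let `y` be the inverse of `x`. The idempotents `eₖ = xᵏyᵏ` decrease with `k`
and satisfy `x * eₖ = eₖ₊₁ * x`. Moving the idempotents of the product
`(eₙ * x) * (eₙ₋₁ * x) * ⋯ * (e₁ * x) = xⁿ` to the left, one sees that any nontrivial rearrangement
of its factors is fixed under left multiplication by `eₙ₊₁`. Hence `n`-permutability forces
`eₙ = eₙ₊₁ = ⋯`, and likewise for `yᵏxᵏ`, which puts `xⁿ` and `yⁿ` inside a two-generated
subgroup: `x` is periodic.

A finitely generated, permutable, periodic monoid is finite (Restivo–Reutenauer): by Shirshov's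
theorem, a long word over a finite ordered alphabet contains either a high power of a short word,
which periodicity shortens, or `n` consecutive factors whose nontrivial rearrangements are all
lexicographically smaller, one of which represents the same element. So the shortlex-least
representatives of the elements have bounded length.
-/

section IdempotentsCommute

/-- Idempotents commute pairwise. In a regular semigroup this is equivalent to the uniqueness of
inverses, and it is the form in which that uniqueness enters computations with powers. -/
def IdempotentsCommute (M : Type*) [Mul M] : Prop :=
  ∀ ⦃e f : M⦄, IsIdempotentElem e → IsIdempotentElem f → Commute e f

theorem IsInverseMonoid.isIdempotentElem_mul {M : Type} [Monoid M] (hM : IsInverseMonoid M)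
    {e f : M} (he : IsIdempotentElem e) (hf : IsIdempotentElem f) : IsIdempotentElem (e * f) := by
  obtain ⟨z, ⟨hl, hr⟩, huniq⟩ := hM (e * f)
  have hz : f * z * e = z := by
    refine huniq _ ⟨?_, ?_⟩
    · calc e * f * (f * z * e) * (e * f) = e * (f * f) * z * (e * e) * f := by
            simp only [mul_assoc]
        _ = e * f * z * (e * f) := by rw [he.eq, hf.eq]; simp only [mul_assoc]
        _ = e * f := hl
    · calc f * z * e * (e * f) * (f * z * e) = f * (z * ((e * e) * (f * f)) * z) * e := by
            simp only [mul_assoc]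
        _ = f * z * e := by rw [he.eq, hf.eq, hr]
  have hzz : IsIdempotentElem z := by
    calc z * z = (f * z * e) * (f * z * e) := by rw [hz]
      _ = f * (z * (e * f) * z) * e := by simp only [mul_assoc]
      _ = z := by rw [hr, hz]
  have hez : e * f = z := (hM z).unique ⟨hr, hl⟩ ⟨by rw [hzz.eq, hzz.eq], by rw [hzz.eq, hzz.eq]⟩
  rwa [hez]

theorem IsInverseMonoid.idempotentsCommute {M : Type} [Monoid M] (hM : IsInverseMonoid M) :
    IdempotentsCommute M := by
  intro e f he hf
  have hef := (hM.isIdempotentElem_mul he hf).eq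
  have hfe := (hM.isIdempotentElem_mul hf he).eq
  refine (hM (e * f)).unique ⟨by rw [hef, hef], by rw [hef, hef]⟩ ⟨?_, ?_⟩
  · calc e * f * (f * e) * (e * f) = e * (f * f) * (e * e) * f := by simp only [mul_assoc]
      _ = e * f * (e * f) := by rw [he.eq, hf.eq]; simp only [mul_assoc]
      _ = e * f := hef
  · calc f * e * (e * f) * (f * e) = f * (e * e) * (f * f) * e := by simp only [mul_assoc]
      _ = f * e * (f * e) := by rw [he.eq, hf.eq]; simp only [mul_assoc]
      _ = f * e := hfe

lemma isIdempotentElem_mul_of_mul_mul_eq_self {M : Type*} [Semigroup M] {x y : M}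
    (hxy : x * y * x = x) : IsIdempotentElem (y * x) := by
  rw [IsIdempotentElem, mul_assoc, ← mul_assoc x, hxy]

variable {M : Type*} [Monoid M] {x y : M}

lemma IdempotentsCommute.mul_mul_mul_eq_mul (hM : IdempotentsCommute M) (hxy : x * y * x = x)
    {e : M} (he : IsIdempotentElem e) : x * e * y * x = x * e := by
  have hcomm := hM he (isIdempotentElem_mul_of_mul_mul_eq_self hxy)
  calc x * e * y * x = x * (e * (y * x)) := by simp only [mul_assoc]
    _ = x * y * x * e := by rw [hcomm.eq]; simp only [mul_assoc]
    _ = x * e := by rw [hxy]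

lemma IdempotentsCommute.mul_eq_mul_mul_mul_of_sq_mul_sq_eq (hM : IdempotentsCommute M)
    (hxy : x * y * x = x) (hyx : y * x * y = y) (hsq : x * x * (y * y) = x * y) :
    y * x = x * y * (y * x) := by
  have hyx_idem := isIdempotentElem_mul_of_mul_mul_eq_self hxy
  have hcomm := hM (isIdempotentElem_mul_of_mul_mul_eq_self hyx) hyx_idem
  calc y * x = y * (x * y) * x := by rw [← mul_assoc, hyx]
    _ = y * (x * x * (y * y)) * x := by rw [hsq]
    _ = (y * x) * ((x * y) * (y * x)) := by simp only [mul_assoc]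
    _ = (y * x) * (y * x) * (x * y) := by rw [hcomm.eq, ← mul_assoc]
    _ = x * y * (y * x) := by rw [hyx_idem.eq, hcomm.eq]

theorem IdempotentsCommute.commute_of_sq_mul_sq_eq (hM : IdempotentsCommute M)
    (hxy : x * y * x = x) (hyx : y * x * y = y) (hsq : x * x * (y * y) = x * y)
    (hsq' : y * y * (x * x) = y * x) : Commute x y := by
  have hcomm := hM (isIdempotentElem_mul_of_mul_mul_eq_self hyx)
    (isIdempotentElem_mul_of_mul_mul_eq_self hxy)
  calc x * y = y * x * (x * y) := hM.mul_eq_mul_mul_mul_of_sq_mul_sq_eq hyx hxy hsq'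
    _ = x * y * (y * x) := hcomm.eq.symm
    _ = y * x := (hM.mul_eq_mul_mul_mul_of_sq_mul_sq_eq hxy hyx hsq).symm

end IdempotentsCommute

section PowIdempotent

/-- The element `xᵏyᵏ`. When `y` is the inverse of `x` in an inverse monoid, it is the idempotent
that stands for the identity on the image of `xᵏ`. -/
def powIdempotent {M : Type*} [Monoid M] (x y : M) (k : ℕ) : M := x ^ k * y ^ k

variable {M : Type*} [Monoid M] {x y : M}

lemma powIdempotent_zero : powIdempotent x y 0 = 1 := by simp [powIdempotent]

lemma powIdempotent_succ (k : ℕ) :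
    powIdempotent x y (k + 1) = x * powIdempotent x y k * y := by
  simp only [powIdempotent, pow_succ' x, pow_succ y, mul_assoc]

lemma isIdempotentElem_powIdempotent (hM : IdempotentsCommute M) (hxy : x * y * x = x) (k : ℕ) :
    IsIdempotentElem (powIdempotent x y k) := by
  induction k with
  | zero => rw [powIdempotent_zero]; exact .one
  | succ k ih =>
    rw [powIdempotent_succ]
    calc x * powIdempotent x y k * y * (x * powIdempotent x y k * y)
        = (x * powIdempotent x y k * y * x) * powIdempotent x y k * y := by
          simp only [mul_assoc]
      _ = x * (powIdempotent x y k * powIdempotent x y k) * y := by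
          rw [hM.mul_mul_mul_eq_mul hxy ih]; simp only [mul_assoc]
      _ = x * powIdempotent x y k * y := by rw [ih.eq]

lemma mul_powIdempotent (hM : IdempotentsCommute M) (hxy : x * y * x = x) (k : ℕ) :
    x * powIdempotent x y k = powIdempotent x y (k + 1) * x := by
  rw [powIdempotent_succ, hM.mul_mul_mul_eq_mul hxy (isIdempotentElem_powIdempotent hM hxy k)]

lemma commute_powIdempotent (hM : IdempotentsCommute M) (hxy : x * y * x = x) (k m : ℕ) :
    Commute (powIdempotent x y k) (powIdempotent x y m) :=
  hM (isIdempotentElem_powIdempotent hM hxy k) (isIdempotentElem_powIdempotent hM hxy m)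

lemma powIdempotent_mul_pow (hM : IdempotentsCommute M) (hxy : x * y * x = x) {k m : ℕ}
    (hkm : k ≤ m) : powIdempotent x y k * x ^ m = x ^ m := by
  have hself : powIdempotent x y k * x ^ k = x ^ k := by
    clear hkm
    induction k with
    | zero => rw [powIdempotent_zero, one_mul]
    | succ k ih => rw [pow_succ', ← mul_assoc, ← mul_powIdempotent hM hxy, mul_assoc, ih]
  rw [← Nat.add_sub_cancel' hkm, pow_add, ← mul_assoc, hself]

lemma powIdempotent_mul_powIdempotent (hM : IdempotentsCommute M) (hxy : x * y * x = x)
    {k m : ℕ} (hkm : k ≤ m) : powIdempotent x y k * powIdempotent x y m = powIdempotent x y m := by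
  rw [powIdempotent.eq_1 x y m, ← mul_assoc, powIdempotent_mul_pow hM hxy hkm]

lemma prod_ofFn_powIdempotent_mul_eq_pow (hM : IdempotentsCommute M) (hxy : x * y * x = x)
    {n : ℕ} (a : Fin n → ℕ) (ha : ∀ i, a i + i ≤ n) :
    (List.ofFn fun i => powIdempotent x y (a i) * x).prod = x ^ n := by
  induction n with
  | zero => simp
  | succ n ih =>
    have htail := ih (fun i => a i.succ) fun i => by
      have := ha i.succ
      rw [Fin.val_succ] at this
      omega
    have hhead : a 0 ≤ n + 1 := ha 0
    rw [List.ofFn_succ, List.prod_cons, htail, mul_assoc, ← pow_succ',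
      powIdempotent_mul_pow hM hxy hhead]

lemma powIdempotent_mul_prod_ofFn (hM : IdempotentsCommute M) (hxy : x * y * x = x)
    {n : ℕ} (a : Fin n → ℕ) (i : Fin n) :
    powIdempotent x y (a i + i) * (List.ofFn fun j => powIdempotent x y (a j) * x).prod =
      (List.ofFn fun j => powIdempotent x y (a j) * x).prod := by
  induction n with
  | zero => exact i.elim0
  | succ n ih =>
    rw [List.ofFn_succ, List.prod_cons]
    cases i using Fin.cases with
    | zero =>
      rw [Fin.val_zero, add_zero, ← mul_assoc, ← mul_assoc,
        (isIdempotentElem_powIdempotent hM hxy _).eq]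
    | succ i =>
      set P := (List.ofFn fun j => powIdempotent x y (a j.succ) * x).prod
      set e := powIdempotent x y (a i.succ + i)
      set e' := powIdempotent x y (a i.succ + i.succ)
      have hshift : x * e = e' * x := mul_powIdempotent hM hxy _
      have hcomm : e' * powIdempotent x y (a 0) = powIdempotent x y (a 0) * e' :=
        commute_powIdempotent hM hxy _ _
      calc e' * (powIdempotent x y (a 0) * x * P)
          = (e' * powIdempotent x y (a 0)) * x * P := by simp only [mul_assoc]
        _ = powIdempotent x y (a 0) * (e' * x) * P := by
            rw [hcomm]; simp only [mul_assoc]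
        _ = powIdempotent x y (a 0) * x * (e * P) := by rw [← hshift]; simp only [mul_assoc]
        _ = powIdempotent x y (a 0) * x * P := by rw [ih (fun j => a j.succ) i]

end PowIdempotent

section Permutable

lemma perm_eq_one_of_forall_le {α : Type*} [PartialOrder α] [WellFoundedLT α]
    {σ : Equiv.Perm α} (hσ : ∀ i, i ≤ σ i) : σ = 1 := by
  ext i
  induction i using WellFoundedLT.induction with
  | ind i ih =>
    have hle : σ.symm i ≤ i := by simpa using hσ (σ.symm i)
    rcases hle.lt_or_eq with hlt | heq
    · have := ih _ hlt
      simp only [Equiv.apply_symm_apply, Equiv.Perm.one_apply] at this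
      exact absurd this hlt.ne'
    · simpa using (σ.symm_apply_eq.1 heq).symm

variable {M : Type} [Monoid M] {x y : M} {n : ℕ}

lemma NPermutable.exists_powIdempotent_mul_pow_eq (hn : NPermutable M n)
    (hM : IdempotentsCommute M) (hxy : x * y * x = x) :
    ∃ m > n, powIdempotent x y m * x ^ n = x ^ n := by
  obtain ⟨σ, hσ, hprod⟩ := hn fun i => powIdempotent x y (n - i) * x
  obtain ⟨i, hi⟩ : ∃ i, σ i < i := by
    by_contra! hle
    exact hσ (perm_eq_one_of_forall_le hle)
  rw [prod_ofFn_powIdempotent_mul_eq_pow hM hxy (fun i => n - i) (by omega)] at hprod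
  refine ⟨n - σ i + i, by omega, ?_⟩
  rw [hprod]
  exact powIdempotent_mul_prod_ofFn hM hxy (fun j => n - σ j) i

lemma NPermutable.powIdempotent_eq_of_le (hn : NPermutable M n) (hM : IdempotentsCommute M)
    (hxy : x * y * x = x) {k : ℕ} (hk : n ≤ k) : powIdempotent x y k = powIdempotent x y n := by
  obtain ⟨m, hm, hpow⟩ := hn.exists_powIdempotent_mul_pow_eq hM hxy
  have hsucc_mul_pow : powIdempotent x y (n + 1) * x ^ n = x ^ n := by
    rw [← hpow, ← mul_assoc, powIdempotent_mul_powIdempotent hM hxy hm]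
  have hsucc : powIdempotent x y (n + 1) = powIdempotent x y n := by
    calc powIdempotent x y (n + 1) = powIdempotent x y (n + 1) * powIdempotent x y n := by
          rw [(commute_powIdempotent hM hxy _ _).eq,
            powIdempotent_mul_powIdempotent hM hxy n.le_succ]
      _ = powIdempotent x y n := by rw [powIdempotent.eq_1 x y n, ← mul_assoc, hsucc_mul_pow]
  induction k, hk using Nat.le_induction with
  | base => rfl
  | succ k _ ih => rw [powIdempotent_succ, ih, ← powIdempotent_succ, hsucc]

theorem NPermutable.commute_pow_pow (hn : NPermutable M n) (hM : IdempotentsCommute M)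
    (hxy : x * y * x = x) (hyx : y * x * y = y) : Commute (x ^ n) (y ^ n) := by
  have hsq {a b : M} (hab : a * b * a = a) : a ^ n * a ^ n * (b ^ n * b ^ n) = a ^ n * b ^ n := by
    rw [← pow_add, ← pow_add]
    exact hn.powIdempotent_eq_of_le hM hab (n.le_add_left n)
  exact hM.commute_of_sq_mul_sq_eq (powIdempotent_mul_pow hM hxy le_rfl)
    (powIdempotent_mul_pow hM hyx le_rfl) (hsq hxy) (hsq hyx)

end Permutable

section Periodic

variable {M : Type} [Monoid M]

lemma isSubgroupOfMonoid_closure {T : Set M} {e : M} (he : e ∈ Subsemigroup.closure T)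
    (hid : ∀ t ∈ T, e * t = t ∧ t * e = t)
    (hinv : ∀ t ∈ T, ∃ t' ∈ Subsemigroup.closure T, t * t' = e ∧ t' * t = e) :
    IsSubgroupOfMonoid (Subsemigroup.closure T) := by
  have hid_closure : ∀ z ∈ Subsemigroup.closure T, e * z = z ∧ z * e = z := by
    intro z hz
    induction hz using Subsemigroup.closure_induction with
    | mem z hz => exact hid z hz
    | mul a b _ _ iha ihb => exact ⟨by rw [← mul_assoc, iha.1], by rw [mul_assoc, ihb.2]⟩
  refine ⟨e, he, hid_closure, fun z hz => ?_⟩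
  induction hz using Subsemigroup.closure_induction with
  | mem z hz => exact hinv z hz
  | mul a b _ hb iha ihb =>
    obtain ⟨a', ha', haa', ha'a⟩ := iha
    obtain ⟨b', hb', hbb', hb'b⟩ := ihb
    refine ⟨b' * a', mul_mem hb' ha', ?_, ?_⟩
    · rw [mul_assoc, ← mul_assoc b, hbb', (hid_closure a' ha').1, haa']
    · rw [mul_assoc, ← mul_assoc a', ha'a, (hid_closure b hb).1, hb'b]

lemma isSubgroupOfMonoid_closure_pair {u v : M} (huv : u * v * u = u) (hvu : v * u * v = v)
    (hcomm : Commute u v) : IsSubgroupOfMonoid (Subsemigroup.closure {u, v}) := by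
  have hu : u ∈ Subsemigroup.closure {u, v} := Subsemigroup.subset_closure (by simp)
  have hv : v ∈ Subsemigroup.closure {u, v} := Subsemigroup.subset_closure (by simp)
  refine isSubgroupOfMonoid_closure (mul_mem hu hv) ?_ ?_
  · rintro t (rfl | rfl)
    · exact ⟨huv, by rw [hcomm.eq, ← mul_assoc, huv]⟩
    · exact ⟨by rw [hcomm.eq, hvu], by rw [← mul_assoc, hvu]⟩
  · rintro t (rfl | rfl)
    · exact ⟨v, hv, rfl, hcomm.eq.symm⟩
    · exact ⟨u, hu, hcomm.eq.symm, rfl⟩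

lemma IsPeriodicElem.of_pow {x : M} {n : ℕ} (hn : 0 < n) (h : IsPeriodicElem (x ^ n)) :
    IsPeriodicElem x := by
  obtain ⟨i, j, hi, hij, heq⟩ := h
  refine ⟨n * i, n * j, Nat.mul_pos hn hi, Nat.mul_lt_mul_of_pos_left hij hn, ?_⟩
  rw [pow_mul, pow_mul, heq]

lemma IsPeriodicElem.eventually_exists_pow_eq {x : M} (h : IsPeriodicElem x) :
    ∀ᶠ p in Filter.atTop, ∃ q < p, x ^ q = x ^ p := by
  obtain ⟨i, j, -, hij, heq⟩ := h
  filter_upwards [Filter.eventually_ge_atTop j] with p hp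
  refine ⟨i + (p - j), by omega, ?_⟩
  rw [pow_add, heq, ← pow_add, Nat.add_sub_cancel' hp]

theorem IsInverseMonoid.isPeriodicElem (hM : IsInverseMonoid M) (hperm : Permutable M)
    (hsub : ∀ S : Subsemigroup M, IsSubgroupOfMonoid S → SubsemigroupFG S →
      ∀ x ∈ S, IsPeriodicElem x) (x : M) : IsPeriodicElem x := by
  classical
  obtain ⟨n, hn, hnperm⟩ := hperm
  obtain ⟨y, ⟨hxy, hyx⟩, -⟩ := hM x
  have hcomm := hM.idempotentsCommute
  have hgroup : IsSubgroupOfMonoid (Subsemigroup.closure {x ^ n, y ^ n}) :=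
    isSubgroupOfMonoid_closure_pair (powIdempotent_mul_pow hcomm hxy le_rfl)
      (powIdempotent_mul_pow hcomm hyx le_rfl) (hnperm.commute_pow_pow hcomm hxy hyx)
  refine .of_pow (n := n) (by omega) (hsub _ hgroup ⟨{x ^ n, y ^ n}, by simp⟩ _ ?_)
  exact Subsemigroup.subset_closure (by simp)

end Periodic

section LexDominates

variable {α : Type*} [LinearOrder α]

/-- `u` is lexicographically greater than `v`, and stays so whatever is appended to either word:
the two words differ at a position where both have a letter. -/
def LexDominates (u v : List α) : Prop := ∀ x y, v ++ x < u ++ y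

lemma lexDominates_of_length_eq_of_lt {u v : List α} (hlen : v.length = u.length) (hlt : v < u) :
    LexDominates u v := by
  intro x y
  induction v generalizing u with
  | nil =>
    obtain rfl := List.length_eq_zero_iff.1 hlen.symm
    exact absurd hlt (lt_irrefl _)
  | cons a v ih =>
    cases u with
    | nil => simp at hlen
    | cons b u =>
      rw [List.cons_append, List.cons_append, List.cons_lt_cons_iff]
      exact (List.cons_lt_cons_iff.1 hlt).imp_right fun h => ⟨h.1, ih (by simpa using hlen) h.2⟩

lemma LexDominates.mono {u u' v v' : List α} (h : LexDominates u v) (hu : u <+: u')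
    (hv : v <+: v') : LexDominates u' v' := by
  obtain ⟨s, rfl⟩ := hu
  obtain ⟨t, rfl⟩ := hv
  intro x y
  rw [List.append_assoc, List.append_assoc]
  exact h _ _

lemma LexDominates.ne {u v : List α} (h : LexDominates u v) : u ≠ v := by
  rintro rfl
  exact lt_irrefl _ (h [] [])

lemma pairwise_lexDominates_of_forall₂_prefix {us vs : List (List α)}
    (h : List.Forall₂ (· <+: ·) us vs) (hus : us.Pairwise LexDominates) :
    vs.Pairwise LexDominates := by
  induction h with
  | nil => exact .nil
  | @cons u v us vs huv h ih =>
    rw [List.pairwise_cons] at hus ⊢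
    refine ⟨fun v' hv' => ?_, ih hus.2⟩
    obtain ⟨i, hi, rfl⟩ := List.getElem_of_mem hv'
    have hi' : i < us.length := h.length_eq ▸ hi
    exact (hus.1 _ (us.getElem_mem hi')).mono huv (h.get hi' hi)

lemma pairwise_lexDominates_sort {S : Finset (List α)} {K : ℕ} (hS : ∀ u ∈ S, u.length = K) :
    (S.sort (· ≥ ·)).Pairwise LexDominates := by
  refine (Finset.sortedGT_sort S).pairwise.imp_of_mem fun {u v} hu hv hlt => ?_
  rw [Finset.mem_sort] at hu hv
  exact lexDominates_of_length_eq_of_lt ((hS v hv).trans (hS u hu).symm) hlt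

lemma flatten_lt_flatten_of_perm {us vs : List (List α)} (hvs : vs.Pairwise LexDominates)
    (hperm : us.Perm vs) (hne : us ≠ vs) : us.flatten < vs.flatten := by
  induction vs generalizing us with
  | nil => exact absurd hperm.eq_nil hne
  | cons v vs ih =>
    rw [List.pairwise_cons] at hvs
    cases us with
    | nil => simp at hperm
    | cons u us =>
      rw [List.flatten_cons, List.flatten_cons]
      by_cases huv : u = v
      · subst huv
        exact List.append_left_lt (ih hvs.2 (List.perm_cons _ |>.1 hperm) fun h => hne (by rw [h]))
      · have hu : u ∈ vs := (List.mem_cons.1 (hperm.subset List.mem_cons_self)).resolve_left huv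
        exact hvs.1 u hu _ _

end LexDominates

section Words

variable {α : Type*}

lemma exists_replicate_sublist_of_card_mul_lt_length {S : Finset α} {l : List α} {n : ℕ}
    (hl : ∀ a ∈ l, a ∈ S) (hcard : S.card * n < l.length) :
    ∃ a, (List.replicate (n + 1) a).Sublist l := by
  classical
  by_contra! hnot
  have hcount : ∀ a ∈ S, (l : Multiset α).count a ≤ n := fun a _ => by
    simpa [List.replicate_sublist_iff] using hnot a
  have hsum := Multiset.sum_count_eq_card (s := S) (m := (l : Multiset α)) hl
  have hle := Finset.sum_le_card_nsmul S _ n hcount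
  rw [hsum, Multiset.coe_card, smul_eq_mul] at hle
  omega

lemma exists_replicate_sublist_flatten_append [Finite α] (L n : ℕ) :
    ∃ B, ∀ w : List α, B ≤ w.length → ∃ (v : List α) (cs : List (List α)) (r : List α),
      v.length = L ∧ (List.replicate (n + 1) v).Sublist cs ∧ w = cs.flatten ++ r := by
  set S := (List.finite_length_eq α L).toFinset
  set N := S.card * n + 1
  refine ⟨N * L, fun w hw => ?_⟩
  set sizes := List.replicate N L
  have hsizes : sizes.sum = (w.take (N * L)).length := by simp [sizes, hw]
  set cs := sizes.splitLengths (w.take (N * L))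
  have hcs_length : cs.length = N := by simp [cs, sizes]
  have hcs : ∀ c ∈ cs, c.length = L := by
    have hmap : cs.map List.length = sizes := List.map_splitLengths_length _ _ hsizes.le
    intro c hc
    exact List.eq_of_mem_replicate (hmap ▸ List.mem_map_of_mem hc)
  obtain ⟨v, hv⟩ := exists_replicate_sublist_of_card_mul_lt_length (S := S) (l := cs) (n := n)
    (by simpa [S] using hcs) (by omega)
  refine ⟨v, cs, w.drop (N * L), hcs v (hv.subset (by simp)), hv, ?_⟩
  rw [List.flatten_splitLengths _ _ hsizes.ge, List.take_append_drop]

lemma exists_flatten_eq_append_flatten_of_sublistForall₂ {us cs : List (List α)}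
    (h : List.SublistForall₂ (· <:+: ·) us cs) :
    ∃ (a : List α) (bs : List (List α)),
      List.Forall₂ (· <+: ·) us bs ∧ cs.flatten = a ++ bs.flatten := by
  induction h with
  | @nil cs => exact ⟨cs.flatten, [], .nil, by simp⟩
  | @cons u c us cs huc _ ih =>
    obtain ⟨a, bs, hbs, hflatten⟩ := ih
    obtain ⟨s, t, rfl⟩ := huc
    exact ⟨s, (u ++ t ++ a) :: bs, .cons ⟨t ++ a, by simp⟩ hbs, by simp [hflatten]⟩
  | @cons_right c us cs _ ih =>
    obtain ⟨a, bs, hbs, hflatten⟩ := ih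
    exact ⟨c ++ a, bs, hbs, by simp [hflatten]⟩

lemma flatten_replicate_take_isPrefix_of_hasPeriod {w : List α} {d p : ℕ} (hw : w.HasPeriod d)
    (hlen : d * p ≤ w.length) : (List.replicate p (w.take d)).flatten <+: w := by
  induction p with
  | zero => simp
  | succ p ih =>
    rw [Nat.mul_succ] at hlen
    have hprefix := (List.prefix_append_right_inj (w.take d)).2 (ih (by omega))
    rw [List.replicate_succ, List.flatten_cons]
    refine List.prefix_of_prefix_length_le hprefix hw ?_
    simp only [List.length_append, List.length_take, List.length_flatten, List.map_replicate,
      List.sum_replicate, smul_eq_mul]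
    rw [min_eq_left (by omega), mul_comm]
    omega

lemma hasPeriod_take_add {w : List α} {d K : ℕ} (h : w.take K = (w.drop d).take K) :
    (w.take (d + K)).HasPeriod d := by
  have hsplit : w.take (d + K) = w.take d ++ w.take K := by rw [List.take_add, h]
  rw [List.HasPeriod, List.take_take, min_eq_left (d.le_add_right K)]
  conv_lhs => rw [hsplit]
  exact (List.prefix_append_right_inj _).2 (List.take_prefix_take_left (K.le_add_left d))

lemma exists_flatten_replicate_isInfix_of_windows_eq {v : List α} {n p i j : ℕ}
    (hv : n + n * p ≤ v.length) (hij : i < j) (hj : j < n)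
    (heq : (v.drop i).take (n * p) = (v.drop j).take (n * p)) :
    ∃ u ≠ [], u.length < n ∧ (List.replicate p u).flatten <:+: v := by
  obtain ⟨d, rfl⟩ := Nat.exists_eq_add_of_lt hij
  set w := v.drop i
  have hw : (w.take (d + 1 + n * p)).HasPeriod (d + 1) := by
    refine hasPeriod_take_add ?_
    rw [List.drop_drop, heq, add_assoc]
  have hlen : d + 1 + n * p ≤ w.length := by rw [List.length_drop]; omega
  have hdp : (d + 1) * p ≤ n * p := Nat.mul_le_mul_right p (by omega)
  have hprefix := flatten_replicate_take_isPrefix_of_hasPeriod (p := p) hw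
    (by rw [List.length_take]; omega)
  have hu : ((w.take (d + 1 + n * p)).take (d + 1)).length = d + 1 := by
    simp only [List.length_take]; omega
  refine ⟨_, List.ne_nil_of_length_eq_add_one hu, by omega, ?_⟩
  exact hprefix.isInfix.trans ((List.take_prefix _ _).isInfix.trans (List.drop_suffix _ _).isInfix)

lemma exists_pairwise_lexDominates_of_windows_injOn [LinearOrder α] {v : List α} {n K : ℕ}
    (hv : n + K ≤ v.length)
    (hinj : Set.InjOn (fun i => (v.drop i).take K) (Finset.range n : Finset ℕ)) :
    ∃ us : List (List α), us.length = n ∧ us.Pairwise LexDominates ∧ ∀ u ∈ us, u <:+: v := by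
  set S := (Finset.range n).image fun i => (v.drop i).take K
  have hS : ∀ u ∈ S, u.length = K := by
    simp only [S, Finset.forall_mem_image, Finset.mem_range, List.length_take, List.length_drop]
    omega
  refine ⟨S.sort (· ≥ ·), ?_, pairwise_lexDominates_sort hS, ?_⟩
  · rw [Finset.length_sort, Finset.card_image_of_injOn hinj, Finset.card_range]
  · simp only [Finset.mem_sort, S, Finset.forall_mem_image]
    exact fun i _ => (List.take_prefix _ _).isInfix.trans (List.drop_suffix _ _).isInfix

-- Shirshov's theorem. A long word contains `n + 1` disjoint copies of some word `v` of length
-- `n + np`. If the `n` factors of `v` of length `np` starting at positions `< n` are distinct, read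
-- the greatest one in the first copy, the next one in the second, and so on; if two of them
-- coincide, they overlap in a periodic factor.
theorem exists_infix_power_or_pairwise_lexDominates [LinearOrder α] [Finite α] (n p : ℕ) :
    ∃ B, ∀ w : List α, B ≤ w.length →
      (∃ u ≠ [], u.length < n ∧ (List.replicate p u).flatten <:+: w) ∨
      ∃ (a : List α) (bs : List (List α)) (c : List α),
        bs.length = n ∧ bs.Pairwise LexDominates ∧ w = a ++ bs.flatten ++ c := by
  obtain ⟨B, hB⟩ := exists_replicate_sublist_flatten_append (α := α) (n + n * p) n
  refine ⟨B, fun w hw => ?_⟩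
  obtain ⟨v, cs, r, hv, hsub, rfl⟩ := hB w hw
  by_cases hinj : Set.InjOn (fun i => (v.drop i).take (n * p)) (Finset.range n : Finset ℕ)
  · right
    obtain ⟨us, hus, hpairwise, hinfix⟩ := exists_pairwise_lexDominates_of_windows_injOn hv.ge hinj
    have hcopies : List.SublistForall₂ (· <:+: ·) us cs := by
      refine List.sublistForall₂_iff.2 ⟨List.replicate n v, ?_,
        (List.replicate_sublist_replicate v |>.2 n.le_succ).trans hsub⟩
      rw [List.forall₂_iff_get]
      simpa [hus] using fun i _ => hinfix _ (us.getElem_mem _)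
    obtain ⟨a, bs, hbs, hflatten⟩ := exists_flatten_eq_append_flatten_of_sublistForall₂ hcopies
    exact ⟨a, bs, r, by rw [← hbs.length_eq, hus],
      pairwise_lexDominates_of_forall₂_prefix hbs hpairwise, by rw [hflatten]⟩
  · left
    obtain ⟨i, j, hij, hj, heq⟩ : ∃ i j, i < j ∧ j < n ∧
        (v.drop i).take (n * p) = (v.drop j).take (n * p) := by
      simp only [Set.InjOn, Finset.coe_range, Set.mem_Iio] at hinj
      push Not at hinj
      obtain ⟨i, hi, j, hj, heq, hne⟩ := hinj
      rcases hne.lt_or_gt with hlt | hlt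
      · exact ⟨i, j, hlt, hj, heq⟩
      · exact ⟨j, i, hlt, hi, heq.symm⟩
    obtain ⟨u, hne, hlt, hinfix⟩ := exists_flatten_replicate_isInfix_of_windows_eq hv.ge hij hj heq
    have hvcs : v <:+: cs.flatten := List.infix_of_mem_flatten (hsub.subset (by simp))
    exact ⟨u, hne, hlt, hinfix.trans (hvcs.trans (List.prefix_append _ _).isInfix)⟩

end Words

section Finiteness

open FreeMonoid

lemma exists_length_lt_of_flatten_replicate_isInfix {α M : Type*} [Monoid M]
    (φ : FreeMonoid α →* M) {u w : List α} {p q : ℕ} (hu : u ≠ [])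
    (hw : (List.replicate p u).flatten <:+: w) (hq : q < p)
    (heq : φ (ofList u) ^ q = φ (ofList u) ^ p) :
    ∃ w' : List α, w'.length < w.length ∧ φ (ofList w') = φ (ofList w) := by
  obtain ⟨a, c, rfl⟩ := hw
  refine ⟨a ++ (List.replicate q u).flatten ++ c, ?_, ?_⟩
  · have := Nat.mul_lt_mul_of_pos_right hq (List.length_pos_iff.2 hu)
    simpa using this
  · simp [ofList_append, ofList_flatten, heq]

lemma ofFn_get_comp_perm_ne {α : Type*} {l : List α} (hl : l.Nodup)
    {σ : Equiv.Perm (Fin l.length)} (hσ : σ ≠ 1) : List.ofFn (l.get ∘ σ) ≠ l := by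
  intro h
  have hcomp : l.get ∘ σ = l.get := List.ofFn_injective (h.trans (List.ofFn_get l).symm)
  exact hσ (Equiv.ext fun i => List.nodup_iff_injective_get.1 hl (congrFun hcomp i))

lemma NPermutable.exists_perm_flatten_lt {α : Type*} [LinearOrder α] {M : Type} [Monoid M]
    (φ : FreeMonoid α →* M) {bs : List (List α)} (hperm : NPermutable M bs.length)
    (hbs : bs.Pairwise LexDominates) :
    ∃ bs' : List (List α), bs'.Perm bs ∧ bs'.flatten < bs.flatten ∧
      φ (ofList bs'.flatten) = φ (ofList bs.flatten) := by
  obtain ⟨σ, hσ, hprod⟩ := hperm fun i => φ (ofList (bs.get i))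
  have hσbs : (List.ofFn (bs.get ∘ σ)).Perm bs := by
    simpa only [List.ofFn_get] using σ.ofFn_comp_perm bs.get
  have hne := ofFn_get_comp_perm_ne (hbs.imp LexDominates.ne) hσ
  refine ⟨_, hσbs, flatten_lt_flatten_of_perm hbs hσbs hne, ?_⟩
  conv_rhs => rw [← List.ofFn_get bs]
  simp only [ofList_flatten, map_list_prod, List.map_ofFn]
  exact hprod.symm

lemma exists_uniform_pow_eq {M : Type} [Monoid M] {S : Set M} (hS : S.Finite)
    (hper : ∀ m ∈ S, IsPeriodicElem m) : ∃ p, ∀ m ∈ S, ∃ q < p, m ^ q = m ^ p :=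
  ((Filter.eventually_all_finite hS).2 fun m hm => (hper m hm).eventually_exists_pow_eq).exists

lemma NPermutable.exists_shortlex_of_length_le {α : Type*} [LinearOrder α] [Finite α] {M : Type}
    [Monoid M] {n : ℕ} (hperm : NPermutable M n) (hper : ∀ x : M, IsPeriodicElem x)
    (φ : FreeMonoid α →* M) :
    ∃ B, ∀ w : List α, B ≤ w.length →
      ∃ w', List.Shortlex (· < ·) w' w ∧ φ (ofList w') = φ (ofList w) := by
  obtain ⟨p, hp⟩ := exists_uniform_pow_eq
    ((List.finite_length_lt α n).image fun u => φ (ofList u)) fun m _ => hper m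
  obtain ⟨B, hB⟩ := exists_infix_power_or_pairwise_lexDominates (α := α) n p
  refine ⟨B, fun w hw => ?_⟩
  rcases hB w hw with ⟨u, hu, hun, hpow⟩ | ⟨a, bs, c, rfl, hbs, rfl⟩
  · obtain ⟨q, hq, heq⟩ := hp _ ⟨u, hun, rfl⟩
    obtain ⟨w', hlt, heval⟩ := exists_length_lt_of_flatten_replicate_isInfix φ hu hpow hq heq
    exact ⟨w', .of_length_lt hlt, heval⟩
  · obtain ⟨bs', hbs', hlt, heval⟩ := hperm.exists_perm_flatten_lt φ hbs
    have hlen : bs'.flatten.length = bs.flatten.length := hbs'.flatten.length_eq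
    refine ⟨a ++ bs'.flatten ++ c, .of_lex (by simp only [List.length_append, hlen]) ?_, ?_⟩
    · rw [List.append_assoc, List.append_assoc]
      exact List.lex_lt.2
        (List.append_left_lt (lexDominates_of_length_eq_of_lt hlen hlt c c))
    · simp only [ofList_append, map_mul, heval]

theorem Permutable.finite_of_isPeriodicElem {M : Type} [Monoid M] (hperm : Permutable M)
    (hfg : Monoid.FG M) (hper : ∀ x : M, IsPeriodicElem x) : Finite M := by
  obtain ⟨n, -, hnperm⟩ := hperm
  obtain ⟨S, hS, φ, hφ⟩ := Monoid.fg_iff_exists_freeMonoid_hom_surjective.1 hfg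
  have : Finite S := hS
  obtain ⟨_, _⟩ := exists_wellFoundedLT S
  obtain ⟨B, hB⟩ := hnperm.exists_shortlex_of_length_le hper φ
  have hshort : ∀ m, ∃ w : List S, w.length < B ∧ φ (ofList w) = m := by
    intro m
    obtain ⟨w, hw, hmin⟩ := (List.Shortlex.wf wellFounded_lt).has_min
      {w : List S | φ (ofList w) = m} (hφ m)
    refine ⟨w, lt_of_not_ge fun hlen => ?_, hw⟩
    obtain ⟨w', hlt, heval⟩ := hB w hlen
    exact hmin w' (heval.trans hw) hlt
  refine Set.finite_univ_iff.1 (((List.finite_length_lt S B).image fun w => φ (ofList w)).subset ?_)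
  exact fun m _ => hshort m

lemma permutable_of_finite (M : Type) [Monoid M] [Finite M] : Permutable M := by
  have := Fintype.ofFinite M
  have hpos : 0 < Fintype.card M := Fintype.card_pos
  refine ⟨Fintype.card M + 1, by omega, fun s => ?_⟩
  obtain ⟨i, j, hij, hs⟩ := Fintype.exists_ne_map_eq_of_card_lt s (by simp)
  exact ⟨Equiv.swap i j, fun h => hij (Equiv.swap_eq_one_iff.1 h),
    by simp only [Equiv.apply_swap_eq_self hs]⟩

lemma isPeriodicElem_of_finite {M : Type} [Monoid M] [Finite M] (x : M) : IsPeriodicElem x := by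
  obtain ⟨i, j, hij, heq⟩ := Finite.exists_ne_map_eq_of_infinite fun t : ℕ => x ^ (t + 1)
  rcases hij.lt_or_gt with hlt | hlt
  · exact ⟨i + 1, j + 1, by omega, by omega, heq⟩
  · exact ⟨j + 1, i + 1, by omega, by omega, heq.symm⟩

end Finiteness

/-- Let `M` be a finitely generated inverse monoid. Then `M` is finite
if and only if `M` is permutable and every finitely generated subgroup of `M` is periodic. -/
theorem finite_iff_permutable_and_fg_subgroups_periodic
    (M : Type) [Monoid M] (hfg : Monoid.FG M) (hinv : IsInverseMonoid M) :
    Finite M ↔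
      (Permutable M ∧
        ∀ S : Subsemigroup M, IsSubgroupOfMonoid S → SubsemigroupFG S →
          ∀ x ∈ S, IsPeriodicElem x) := by
  constructor
  · intro _
    exact ⟨permutable_of_finite M, fun _ _ _ x _ => isPeriodicElem_of_finite x⟩
  · rintro ⟨hperm, hsub⟩
    exact hperm.finite_of_isPeriodicElem hfg (hinv.isPeriodicElem hperm hsub)
end

section
/- Let M be a monoid. Then at least one of the following holds: (i) 𝔏(Val,CF,M) equals the class of context-free languages; (ii) 𝔏(Val,CF,M) contains 𝔏(Val,CF,B), where B is the bicyclic monoid; (iii) 𝔏(Val,CF,M) contains 𝔏(Val,CF,ℤ); (iv) 𝔏(Val,CF,M) = 𝔏(Val,CF,G) for some infinite periodic group G which is not locally finite. -/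
/-- A context-free valence grammar over a monoid `M` with terminal alphabet `T`:
a context-free grammar (finitely many nonterminals, finitely many rules) each of whose
rules `(A, α, m)` rewrites the nonterminal `A` to the string `α ∈ (N ∪ T)*` and carries
the valence `m ∈ M`. -/
structure CFValenceGrammar (T : Type) (M : Type) [Monoid M] where
  NT : Type
  fintypeNT : Fintype NT
  start : NT
  rules : List (NT × List (NT ⊕ T) × M)

namespace CFValenceGrammar

variable {T M : Type} [Monoid M]

/-- One derivation step on pairs (sentential form, accumulated valence). -/
def Produces (G : CFValenceGrammar T M)
    (x y : List (G.NT ⊕ T) × M) : Prop :=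
  ∃ r ∈ G.rules, ∃ u v : List (G.NT ⊕ T),
    x.1 = u ++ Sum.inl r.1 :: v ∧ y.1 = u ++ r.2.1 ++ v ∧ y.2 = x.2 * r.2.2

/-- The derivation relation: the reflexive-transitive closure of `Produces`. -/
def Derives (G : CFValenceGrammar T M) :
    List (G.NT ⊕ T) × M → List (G.NT ⊕ T) × M → Prop :=
  Relation.ReflTransGen G.Produces

/-- The language generated by a context-free valence grammar: terminal words derivable
from the start symbol by a valid derivation, i.e. one whose product of valences is the
identity. -/
def lang (G : CFValenceGrammar T M) : Language T :=
  { w | G.Derives ([Sum.inl G.start], 1) (w.map Sum.inr, 1) }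

end CFValenceGrammar

/-- `𝔏(Val, CF, M)`: the family of languages over the terminal alphabet `T` generated by
context-free valence grammars over `M`. -/
def LValCF (T : Type) (M : Type) [Monoid M] : Set (Language T) :=
  { L | ∃ G : CFValenceGrammar T M, G.lang = L }

/-- The map `P_x : u ↦ ux` on `X*`, as an everywhere-defined map on `Option (X*)`
(where `none` encodes "undefined"). -/
def polyP (X : Type) (x : X) : Function.End (Option (List X)) :=
  fun u => u.map fun v => v ++ [x]

/-- The partial map `Q_x : ux ↦ u` on `X*`, as a map on `Option (X*)`. -/
def polyQ (X : Type) [DecidableEq X] (x : X) : Function.End (Option (List X)) :=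
  fun u => u.bind fun v => if v.getLast? = some x then some v.dropLast else none

/-- The polycyclic monoid on the alphabet `X`: the submonoid of the monoid of partial
functions on `X*` (encoded as total functions on `Option (X*)`) generated by the maps
`P_x` and `Q_x` for `x ∈ X`. -/
def PolycyclicMonoid (X : Type) [DecidableEq X] :
    Submonoid (Function.End (Option (List X))) :=
  Submonoid.closure (Set.range (polyP X) ∪ Set.range (polyQ X))

/-- The bicyclic monoid `B = ⟨p, q ∣ pq = 1⟩`: the polycyclic monoid on a one-letter
alphabet. -/
abbrev BicyclicMonoid : Type := ↥(PolycyclicMonoid (Fin 1))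

/-!
The group of units of a Dedekind-finite monoid carries all valid derivations, because a product
equal to `1` has only units as factors. So either `M` has a one-sided unit, which generates a copy
of the bicyclic monoid, or `M` may be replaced by the group `Mˣ`. If `Mˣ` has an element of infinite
order it contains `ℤ`; otherwise it is periodic, and it serves as the group of the last case unless
it is locally finite. Then the valences of a grammar generate a finite group, and finite groups add
nothing to the context-free grammars.

For a finite group `H`, a subderivation enters a valid derivation through its valence word, which is
shuffled with the valences `z` applied elsewhere. Deleting a factor of product `1` from a valence
word `v` loses nothing, since the factor can be reinserted contiguously; and by a pigeonhole
argument a given product of a shuffle of `v` and `z` is already attained by some `u` of length at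
most `|H|²` that arises from `v` by such deletions. Annotating each nonterminal by such a word `u`,
a promise on how its subderivation acts on every context, gives an ordinary context-free grammar.
-/

/-! ### Shuffles of words -/

/-- `Shuffle u v y`: the word `y` is a shuffle (interleaving) of `u` and `v`. -/
inductive Shuffle {α : Type*} : List α → List α → List α → Prop
  | nil : Shuffle [] [] []
  | left (a : α) {u v y : List α} : Shuffle u v y → Shuffle (a :: u) v (a :: y)
  | right (a : α) {u v y : List α} : Shuffle u v y → Shuffle u (a :: v) (a :: y)

namespace Shuffle

variable {α : Type*} {u v w x y z u' v' y' : List α}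

theorem nil_left : ∀ v : List α, Shuffle [] v v
  | [] => nil
  | a :: v => right a (nil_left v)

theorem comm (h : Shuffle u v y) : Shuffle v u y := by
  induction h with
  | nil => exact nil
  | left a _ ih => exact right a ih
  | right a _ ih => exact left a ih

theorem nil_right (v : List α) : Shuffle v [] v := (nil_left v).comm

theorem eq_of_nil_left (h : Shuffle [] v y) : y = v := by
  induction v generalizing y with
  | nil => cases h; rfl
  | cons a v ih =>
    cases h with
    | right _ h => rw [ih h]

theorem append (h : Shuffle u v y) (h' : Shuffle u' v' y') :
    Shuffle (u ++ u') (v ++ v') (y ++ y') := by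
  induction h with
  | nil => exact h'
  | left a _ ih => exact left a ih
  | right a _ ih => exact right a ih

theorem assoc (hx : Shuffle u v x) (hy : Shuffle x w y) : ∃ z, Shuffle v w z ∧ Shuffle u z y := by
  induction hy generalizing u v with
  | nil => cases hx; exact ⟨[], nil, nil⟩
  | left a _ ih =>
    cases hx with
    | left _ hx =>
      obtain ⟨z, hz, hy⟩ := ih hx
      exact ⟨z, hz, left a hy⟩
    | right _ hx =>
      obtain ⟨z, hz, hy⟩ := ih hx
      exact ⟨a :: z, left a hz, right a hy⟩
  | right a _ ih =>
    obtain ⟨z, hz, hy⟩ := ih hx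
    exact ⟨a :: z, right a hz, right a hy⟩

theorem cons_left (a : α) (z : List α) (h : Shuffle u v y) :
    Shuffle (a :: u) (z ++ v) (z ++ a :: y) :=
  (nil_left z).append (left a h)

theorem exists_of_cons_left {a : α} (h : Shuffle (a :: u) z y) :
    ∃ z₁ z₂ y₂, z = z₁ ++ z₂ ∧ y = z₁ ++ a :: y₂ ∧ Shuffle u z₂ y₂ := by
  induction z generalizing y with
  | nil =>
    cases h with
    | left _ h => exact ⟨[], [], _, rfl, rfl, h⟩
  | cons b z ih =>
    cases h with
    | left _ h => exact ⟨[], b :: z, _, rfl, rfl, h⟩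
    | right _ h =>
      obtain ⟨z₁, z₂, y₂, rfl, rfl, hu⟩ := ih h
      exact ⟨b :: z₁, z₂, y₂, rfl, rfl, hu⟩

theorem exists_of_append_left (h : Shuffle (u ++ v) z y) :
    ∃ z₁ z₂ y₁ y₂, z = z₁ ++ z₂ ∧ y = y₁ ++ y₂ ∧ Shuffle u z₁ y₁ ∧ Shuffle v z₂ y₂ := by
  induction u generalizing z y with
  | nil => exact ⟨[], z, [], y, rfl, rfl, nil, h⟩
  | cons a u ih =>
    obtain ⟨z₀, z', y', rfl, rfl, h'⟩ := exists_of_cons_left h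
    obtain ⟨z₁, z₂, y₁, y₂, rfl, rfl, h₁, h₂⟩ := ih h'
    exact ⟨z₀ ++ z₁, z₂, z₀ ++ a :: y₁, y₂, by simp, by simp, h₁.cons_left a z₀, h₂⟩

theorem of_blocks (t : List (α × List α)) :
    Shuffle (t.map Prod.fst) (t.flatMap Prod.snd) (t.flatMap fun b => b.1 :: b.2) := by
  induction t with
  | nil => exact nil
  | cons b t ih => exact left b.1 ((nil_left b.2).append ih)

theorem exists_blocks (h : Shuffle v z y) :
    ∃ (z₀ : List α) (t : List (α × List α)), v = t.map Prod.fst ∧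
      z = z₀ ++ t.flatMap Prod.snd ∧ y = z₀ ++ t.flatMap fun b => b.1 :: b.2 := by
  induction v generalizing z y with
  | nil => exact ⟨z, [], rfl, by simp, by simp [h.eq_of_nil_left]⟩
  | cons a v ih =>
    obtain ⟨z₁, z₂, y₂, rfl, rfl, h'⟩ := exists_of_cons_left h
    obtain ⟨z₀, t, rfl, rfl, rfl⟩ := ih h'
    exact ⟨z₁, (a, z₀) :: t, rfl, by simp, by simp⟩

end Shuffle

/-- A set of words, regarded as an element of the commutative monoid whose multiplication is the
shuffle product. It is a type synonym of `Set (List α)` because the multiplication of `Language α`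
is concatenation. -/
def ShuffleLang (α : Type*) : Type _ := Set (List α)

namespace ShuffleLang

section CommMonoid

variable {α : Type*} {U V : ShuffleLang α} {y : List α}

instance : Membership (List α) (ShuffleLang α) := ⟨Set.Mem⟩

instance : Singleton (List α) (ShuffleLang α) := ⟨Set.singleton⟩

theorem ext (h : ∀ y, y ∈ U ↔ y ∈ V) : U = V := Set.ext h

theorem mem_singleton {u : List α} : y ∈ ({u} : ShuffleLang α) ↔ y = u := Iff.rfl

instance : Mul (ShuffleLang α) := ⟨fun U V => {y : List α | ∃ u ∈ U, ∃ v ∈ V, Shuffle u v y}⟩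

instance : One (ShuffleLang α) := ⟨{[]}⟩

theorem mem_one : y ∈ (1 : ShuffleLang α) ↔ y = [] := Iff.rfl

protected theorem mul_comm (U V : ShuffleLang α) : U * V = V * U :=
  ext fun _ => ⟨fun ⟨u, hu, v, hv, h⟩ => ⟨v, hv, u, hu, h.comm⟩,
    fun ⟨v, hv, u, hu, h⟩ => ⟨u, hu, v, hv, h.comm⟩⟩

protected theorem one_mul (U : ShuffleLang α) : 1 * U = U := by
  refine ext fun y => ⟨?_, fun hy => ⟨[], rfl, y, hy, .nil_left y⟩⟩
  rintro ⟨_, rfl, u, hu, h⟩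
  rwa [h.eq_of_nil_left]

instance : CommMonoid (ShuffleLang α) where
  mul_assoc U V W := by
    refine ext fun y => ⟨?_, ?_⟩
    · rintro ⟨x, ⟨u, hu, v, hv, hx⟩, w, hw, hy⟩
      obtain ⟨z, hz, hy⟩ := hx.assoc hy
      exact ⟨u, hu, z, ⟨v, hv, w, hw, hz⟩, hy⟩
    · rintro ⟨u, hu, x, ⟨v, hv, w, hw, hx⟩, hy⟩
      obtain ⟨z, hz, hy⟩ := hx.comm.assoc hy.comm
      exact ⟨z, ⟨u, hu, v, hv, hz.comm⟩, w, hw, hy.comm⟩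
  one_mul := ShuffleLang.one_mul
  mul_one U := by rw [ShuffleLang.mul_comm, ShuffleLang.one_mul]
  mul_comm := ShuffleLang.mul_comm

/-- The words `a :: u` with `u ∈ U`: a step of valence `a` precedes those recorded by `U`. -/
def prepend (a : α) (U : ShuffleLang α) : ShuffleLang α := {y : List α | ∃ u ∈ U, y = a :: u}

end CommMonoid

/-- `U` is simulated by `V` if, in every context, each product of a shuffle of a word of `U` is also
the product of a shuffle of a word of `V`. -/
def SimulatedBy {M : Type*} [Monoid M] (U V : ShuffleLang M) : Prop :=
  ∀ Z : ShuffleLang M, ∀ y ∈ U * Z, ∃ y' ∈ V * Z, y'.prod = y.prod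

namespace SimulatedBy

variable {M : Type*} [Monoid M] {U V W U' V' : ShuffleLang M}

theorem of_forall_mem (h : ∀ u ∈ U, u ∈ V) : U.SimulatedBy V :=
  fun _ y ⟨u, hu, z, hz, hy⟩ => ⟨y, ⟨u, h u hu, z, hz, hy⟩, rfl⟩

theorem trans (hUV : U.SimulatedBy V) (hVW : V.SimulatedBy W) : U.SimulatedBy W := by
  intro Z y hy
  obtain ⟨y', hy', hprod'⟩ := hUV Z y hy
  obtain ⟨y'', hy'', hprod''⟩ := hVW Z y' hy'
  exact ⟨y'', hy'', hprod''.trans hprod'⟩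

theorem mul_right (h : U.SimulatedBy V) (W : ShuffleLang M) : (U * W).SimulatedBy (V * W) := by
  intro Z
  simpa only [mul_assoc] using h (W * Z)

theorem mul (h : U.SimulatedBy V) (h' : U'.SimulatedBy V') : (U * U').SimulatedBy (V * V') :=
  (h.mul_right U').trans (by simpa only [mul_comm] using h'.mul_right V)

theorem prepend (m : M) (h : U.SimulatedBy V) :
    (U.prepend m).SimulatedBy (V.prepend m) := by
  rintro Z _ ⟨_, ⟨u, hu, rfl⟩, z, hz, hy⟩
  obtain ⟨z₁, z₂, y₂, rfl, rfl, hy₂⟩ := hy.exists_of_cons_left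
  obtain ⟨y', ⟨v, hv, z', hz', hy'⟩, hprod⟩ := h {z₂} y₂ ⟨u, hu, z₂, rfl, hy₂⟩
  obtain rfl : z₂ = z' := (mem_singleton.1 hz').symm
  exact ⟨z₁ ++ m :: y', ⟨m :: v, ⟨v, hv, rfl⟩, z₁ ++ z₂, hz, hy'.cons_left m z₁⟩, by simp [hprod]⟩

theorem exists_prod_eq (h : U.SimulatedBy V) {u : List M} (hu : u ∈ U) :
    ∃ v ∈ V, v.prod = u.prod := by
  simpa only [mul_one] using h 1 u (by rwa [mul_one])

theorem insert_of_prod_eq_one {m : List M} (hm : m.prod = 1) (a b : List M) :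
    ({a ++ b} : ShuffleLang M).SimulatedBy {a ++ m ++ b} := by
  rintro Z _ ⟨_, rfl, z, hz, hy⟩
  obtain ⟨z₁, z₂, y₁, y₂, rfl, rfl, hy₁, hy₂⟩ := hy.exists_of_append_left
  refine ⟨y₁ ++ m ++ y₂, ⟨a ++ m ++ b, rfl, z₁ ++ z₂, hz, ?_⟩, by simp [hm]⟩
  simpa using (hy₁.append (.nil_right m)).append hy₂

end SimulatedBy

end ShuffleLang

/-! ### Shortening valence words over a finite group -/

theorem exists_eq_append_append_of_card_le {α Q : Type*} [Finite Q] (φ : List α → Q) {t : List α}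
    (ht : Nat.card Q ≤ t.length) : ∃ a m b, t = a ++ m ++ b ∧ m ≠ [] ∧ φ (a ++ m) = φ a := by
  have := Fintype.ofFinite Q
  obtain ⟨i, j, hij, hφ⟩ := Fintype.exists_ne_map_eq_of_card_lt
    (fun i : Fin (t.length + 1) => φ (t.take i)) (by simpa [Nat.lt_succ_iff] using ht)
  wlog hlt : i < j generalizing i j
  · exact this j i hij.symm hφ.symm (lt_of_le_of_ne (not_lt.1 hlt) hij.symm)
  have htake : t.take i ++ (t.take j).drop i = t.take j := by
    conv_rhs => rw [← List.take_append_drop i (t.take j), List.take_take,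
      min_eq_left (Fin.le_def.1 hlt.le)]
  refine ⟨t.take i, (t.take j).drop i, t.drop j, ?_, ?_, by rw [htake, hφ]⟩
  · rw [htake, List.take_append_drop]
  · have := Fin.lt_def.1 hlt
    have := j.is_lt
    rw [ne_eq, ← List.length_eq_zero_iff, List.length_drop, List.length_take]
    omega

namespace Shuffle

variable {H : Type*} [Group H] [Finite H] {v z y : List H}

theorem exists_delete_of_card_le (h : Shuffle v z y) (hv : Nat.card (H × H) ≤ v.length) :
    ∃ a m b, v = a ++ m ++ b ∧ m ≠ [] ∧ m.prod = 1 ∧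
      ∃ y', Shuffle (a ++ b) z y' ∧ y'.prod = y.prod := by
  obtain ⟨z₀, t, rfl, rfl, rfl⟩ := h.exists_blocks
  let V (t : List (H × List H)) : List H := t.map Prod.fst
  let Z (t : List (H × List H)) : List H := t.flatMap Prod.snd
  let Y (t : List (H × List H)) : List H := t.flatMap fun b => b.1 :: b.2
  -- If the blocks `m` change neither of these values, then `V m` has product `1` and `Y m` has the
  -- same product as `Z m`, so dropping `V m` from the shuffle preserves its product.
  obtain ⟨a, m, b, rfl, hm, hφ⟩ := exists_eq_append_append_of_card_le
    (fun t => ((V t).prod, (Y t).prod * (Z t).prod⁻¹)) (t := t) (by simpa using hv)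
  have hV : (V m).prod = 1 := by simpa [V] using (Prod.ext_iff.1 hφ).1
  have hYZ : (Y m).prod = (Z m).prod := by
    have : (Y a).prod * ((Y m).prod * (Z m).prod⁻¹) * (Z a).prod⁻¹ =
        (Y a).prod * (Z a).prod⁻¹ := by
      simpa [Y, Z, mul_assoc] using (Prod.ext_iff.1 hφ).2
    rwa [mul_left_inj, mul_eq_left, mul_inv_eq_one] at this
  refine ⟨V a, V m, V b, by simp [V], by simpa [V] using hm, hV,
    z₀ ++ (Y a ++ (Z m ++ Y b)), ?_, ?_⟩
  · simpa [Z] using (nil_left z₀).append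
      ((of_blocks a).append ((nil_left (Z m)).append (of_blocks b)))
  · simp only [List.prod_append, ← hYZ]
    simp [Y]

theorem exists_short_simulatedBy (h : Shuffle v z y) :
    ∃ u : List H, u.length ≤ Nat.card (H × H) ∧ ({u} : ShuffleLang H).SimulatedBy {v} ∧
      ∃ y', Shuffle u z y' ∧ y'.prod = y.prod := by
  induction hn : v.length using Nat.strong_induction_on generalizing v y with
  | _ n ih =>
    by_cases hv : v.length ≤ Nat.card (H × H)
    · exact ⟨v, hv, .of_forall_mem fun _ => id, y, h, rfl⟩
    obtain ⟨a, m, b, rfl, hm, hprod, y', hy', hyy'⟩ :=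
      h.exists_delete_of_card_le (le_of_not_ge hv)
    have hlt : (a ++ b).length < n := by
      have := List.length_pos_of_ne_nil hm
      simp only [List.length_append] at hn ⊢
      omega
    obtain ⟨u, hu, hsim, y'', hy'', hyy''⟩ := ih _ hlt hy' rfl
    exact ⟨u, hu, hsim.trans (.insert_of_prod_eq_one hprod a b), y'', hy'', hyy''.trans hyy'⟩

end Shuffle

/-! ### Context-free grammars as systems of inequalities -/

theorem prod_map_le_of_derives {T : Type*} {g : ContextFreeGrammar T}
    {I : Symbol T g.NT → Language T}
    (hI : ∀ r ∈ g.rules, (r.output.map I).prod ≤ I (.nonterminal r.input))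
    {α β : List (Symbol T g.NT)} (h : g.Derives α β) : (β.map I).prod ≤ (α.map I).prod := by
  induction h with
  | refl => rfl
  | tail _ hstep ih =>
    obtain ⟨r, hr, hrw⟩ := hstep
    obtain ⟨p, q, rfl, rfl⟩ := hrw.exists_parts
    refine le_trans ?_ ih
    simp only [List.map_append, List.prod_append, List.map_cons, List.map_nil, List.prod_singleton]
    gcongr
    exact hI r hr

theorem language_le_of_prod_map_le {T : Type*} {g : ContextFreeGrammar T}
    {I : Symbol T g.NT → Language T} (hterm : ∀ t, I (.terminal t) = {[t]})
    (hI : ∀ r ∈ g.rules, (r.output.map I).prod ≤ I (.nonterminal r.input)) :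
    g.language ≤ I (.nonterminal g.initial) := by
  intro w hw
  have hmem : ∀ w : List T, w ∈ ((w.map Symbol.terminal).map I).prod := by
    intro w
    induction w with
    | nil => exact Language.nil_mem_one
    | cons t w ih =>
      rw [List.map_cons, List.map_cons, List.prod_cons, hterm]
      exact Language.append_mem_mul (a := [t]) rfl ih
  simpa using prod_map_le_of_derives hI hw (hmem w)

/-! ### Finite groups of valences -/

namespace CFValenceGrammar

variable {T M : Type} [Monoid M]

/-- `G.Trace α v β`: the sentential form `β` is derivable from `α` by rules whose valences are, in
order, the letters of `v`. -/
inductive Trace (G : CFValenceGrammar T M) :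
    List (G.NT ⊕ T) → List M → List (G.NT ⊕ T) → Prop
  | refl (α : List (G.NT ⊕ T)) : Trace G α [] α
  | head {A : G.NT} {γ : List (G.NT ⊕ T)} {m : M} (p q : List (G.NT ⊕ T)) {v : List M}
      {β : List (G.NT ⊕ T)} : (A, γ, m) ∈ G.rules → Trace G (p ++ γ ++ q) v β →
      Trace G (p ++ .inl A :: q) (m :: v) β

variable {G : CFValenceGrammar T M}

theorem Trace.derives {α β : List (G.NT ⊕ T)} {v : List M} (h : G.Trace α v β) (m : M) :
    G.Derives (α, m) (β, m * v.prod) := by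
  induction h generalizing m with
  | refl =>
    rw [List.prod_nil, mul_one]
    exact .refl
  | @head A γ k p q v β hr _ ih =>
    rw [List.prod_cons, ← mul_assoc]
    exact .head ⟨(A, γ, k), hr, p, q, rfl, rfl, rfl⟩ (ih (m * k))

theorem Trace.shuffle {α₁ α₂ β₁ β₂ : List (G.NT ⊕ T)} {v₁ v₂ v : List M}
    (hv : Shuffle v₁ v₂ v) (h₁ : G.Trace α₁ v₁ β₁) (h₂ : G.Trace α₂ v₂ β₂) :
    G.Trace (α₁ ++ α₂) v (β₁ ++ β₂) := by
  induction hv generalizing α₁ α₂ with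
  | nil => cases h₁; cases h₂; exact .refl _
  | left _ _ ih =>
    cases h₁ with
    | head p q hr h₁ => simpa using Trace.head p (q ++ α₂) hr (by simpa using ih h₁ h₂)
  | right _ _ ih =>
    cases h₂ with
    | head p q hr h₂ => simpa using Trace.head (α₁ ++ p) q hr (by simpa using ih h₁ h₂)

/-- The valence words of the derivations of the terminal word `w` from `α`. -/
def valenceWords (G : CFValenceGrammar T M) (α : List (G.NT ⊕ T)) (w : List T) : ShuffleLang M :=
  {v : List M | G.Trace α v (w.map .inr)}

theorem mem_valenceWords_append {α₁ α₂ : List (G.NT ⊕ T)} {w₁ w₂ : List T} {v : List M}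
    (hv : v ∈ G.valenceWords α₁ w₁ * G.valenceWords α₂ w₂) :
    v ∈ G.valenceWords (α₁ ++ α₂) (w₁ ++ w₂) := by
  obtain ⟨v₁, h₁, v₂, h₂, hv⟩ := hv
  change G.Trace _ _ _
  rw [List.map_append]
  exact Trace.shuffle hv h₁ h₂

theorem mem_valenceWords_of_mem_prepend {A : G.NT} {γ : List (G.NT ⊕ T)} {m : M}
    (hr : (A, γ, m) ∈ G.rules) {w : List T} {v : List M}
    (hv : v ∈ (G.valenceWords γ w).prepend m) : v ∈ G.valenceWords [.inl A] w := by
  obtain ⟨v, hv, rfl⟩ := hv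
  exact Trace.head [] [] hr (by rwa [List.append_nil])

end CFValenceGrammar

/-- The words of length at most `K`, used to annotate nonterminals. -/
abbrev ShortWord (M : Type*) (K : ℕ) : Type _ := {u : List M // u.length ≤ K}

section Unannotate

variable {T N M : Type*} {K : ℕ}

/-- Forgets the annotation of a nonterminal. -/
def unannotate : Symbol T (N × ShortWord M K) → N ⊕ T
  | .nonterminal A => .inl A.1
  | .terminal t => .inr t

/-- The shuffles of the annotations of the nonterminals in a sentential form. -/
def annotationWords (α : List (Symbol T (N × ShortWord M K))) : ShuffleLang M :=
  (α.map fun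
    | .nonterminal A => {A.2.1}
    | .terminal _ => 1).prod

@[simp]
theorem annotationWords_append (α β : List (Symbol T (N × ShortWord M K))) :
    annotationWords (α ++ β) = annotationWords α * annotationWords β := by
  simp [annotationWords]

@[simp]
theorem annotationWords_nonterminal_cons (A : N × ShortWord M K)
    (α : List (Symbol T (N × ShortWord M K))) :
    annotationWords (.nonterminal A :: α) = {A.2.1} * annotationWords α := by
  simp [annotationWords]

@[simp]
theorem annotationWords_terminal_cons (t : T) (α : List (Symbol T (N × ShortWord M K))) :
    annotationWords (.terminal t :: α) = annotationWords α := by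
  simp [annotationWords]

theorem annotationWords_terminals (w : List T) :
    annotationWords (w.map .terminal : List (Symbol T (N × ShortWord M K))) = 1 := by
  induction w with
  | nil => rfl
  | cons t w ih => simpa using ih

theorem finite_preimage_singleton_map {α β : Type*} {f : α → β} (hf : ∀ b, (f ⁻¹' {b}).Finite)
    (l : List β) : (List.map f ⁻¹' {l}).Finite := by
  induction l with
  | nil => exact (Set.finite_singleton []).subset fun l hl => List.map_eq_nil_iff.1 hl
  | cons b l ih =>
    refine ((hf b).image2 List.cons ih).subset fun l' hl' => ?_
    obtain ⟨a, l', rfl, ha, hl'⟩ := List.map_eq_cons_iff.1 hl'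
    exact ⟨a, ha, l', hl', rfl⟩

theorem finite_preimage_singleton_unannotate [Finite N] [Finite M] (c : N ⊕ T) :
    ((unannotate : Symbol T (N × ShortWord M K) → N ⊕ T) ⁻¹' {c}).Finite := by
  have : Finite (ShortWord M K) := (List.finite_length_le M K).to_subtype
  cases c with
  | inl A =>
    refine (Set.finite_range Symbol.nonterminal).subset ?_
    rintro (t | A') h
    · cases h
    · exact ⟨A', rfl⟩
  | inr t =>
    refine (Set.finite_singleton (Symbol.terminal t)).subset ?_
    rintro (t' | A') h
    · cases h; rfl
    · cases h

end Unannotate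

namespace CFValenceGrammar

variable {T M : Type} [Monoid M] {K : ℕ}

/-- The annotated versions of the rules of `G`: the annotation of the left-hand side is simulated by
the valence of the rule followed by any shuffle of the annotations on the right-hand side. -/
def annotatedRules (G : CFValenceGrammar T M) (K : ℕ) :
    Set (ContextFreeRule T (G.NT × ShortWord M K)) :=
  {r | ∃ m, (r.input.1, r.output.map unannotate, m) ∈ G.rules ∧
    ShuffleLang.SimulatedBy {r.input.2.1} ((annotationWords r.output).prepend m)}

theorem finite_annotatedRules [Finite M] (G : CFValenceGrammar T M) (K : ℕ) :
    (G.annotatedRules K).Finite := by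
  have : Finite G.NT := @Finite.of_fintype _ G.fintypeNT
  have : Finite (ShortWord M K) := (List.finite_length_le M K).to_subtype
  refine (G.rules.finite_toSet.biUnion fun r _ => Set.Finite.image2 ContextFreeRule.mk
    (Set.finite_univ (α := G.NT × ShortWord M K)) (finite_preimage_singleton_map
      finite_preimage_singleton_unannotate r.2.1)).subset ?_
  rintro ⟨A, α⟩ ⟨m, hr, -⟩
  exact Set.mem_biUnion hr ⟨A, trivial, α, rfl, rfl⟩

/-- The context-free grammar of annotated rules of `G`; the start symbol promises the empty valence
word, hence a valid derivation. -/
noncomputable def annotate [Finite M] (G : CFValenceGrammar T M) (K : ℕ) :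
    ContextFreeGrammar T where
  NT := G.NT × ShortWord M K
  initial := (G.start, ⟨[], Nat.zero_le K⟩)
  rules := (G.finite_annotatedRules K).toFinset

/-- Interprets an annotated nonterminal by the words having derivations that keep its promise. -/
def annotationLang (G : CFValenceGrammar T M) (K : ℕ) :
    Symbol T (G.NT × ShortWord M K) → Language T
  | .terminal t => {[t]}
  | .nonterminal A =>
    {w : List T | ShuffleLang.SimulatedBy {A.2.1} (G.valenceWords [.inl A.1] w)}

theorem annotationWords_simulatedBy {G : CFValenceGrammar T M}
    {α : List (Symbol T (G.NT × ShortWord M K))} {w : List T}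
    (hw : w ∈ (α.map (G.annotationLang K)).prod) :
    (annotationWords α).SimulatedBy (G.valenceWords (α.map unannotate) w) := by
  induction α generalizing w with
  | nil =>
    obtain rfl : w = [] := hw
    refine .of_forall_mem fun u hu => ?_
    obtain rfl := ShuffleLang.mem_one.1 hu
    exact Trace.refl []
  | cons c α ih =>
    rw [List.map_cons, List.prod_cons] at hw
    obtain ⟨w₁, hw₁, w₂, hw₂, rfl⟩ := Language.mem_mul.1 hw
    have key : (annotationWords [c]).SimulatedBy (G.valenceWords [unannotate c] w₁) := by
      cases c with
      | terminal t =>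
        obtain rfl : w₁ = [t] := hw₁
        refine .of_forall_mem fun u hu => ?_
        rw [annotationWords_terminal_cons] at hu
        obtain rfl := ShuffleLang.mem_one.1 hu
        exact Trace.refl [.inr t]
      | nonterminal A =>
        rw [annotationWords, List.map_singleton, List.prod_singleton]
        exact hw₁
    have happ := annotationWords_append [c] α
    rw [List.singleton_append] at happ
    rw [happ]
    exact (key.mul (ih hw₂)).trans (.of_forall_mem fun _ => mem_valenceWords_append)

theorem language_annotate_le [Finite M] (G : CFValenceGrammar T M) (K : ℕ) :
    (G.annotate K).language ≤ G.lang := by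
  have hsound : (G.annotate K).language ≤
      G.annotationLang K (.nonterminal (G.start, ⟨[], Nat.zero_le K⟩)) := by
    refine language_le_of_prod_map_le (g := G.annotate K) (fun _ => rfl) fun r hr w hw => ?_
    obtain ⟨m, hrule, hsim⟩ := (Set.Finite.mem_toFinset _).1 hr
    exact hsim.trans <| ((annotationWords_simulatedBy hw).prepend m).trans <|
      .of_forall_mem fun _ => mem_valenceWords_of_mem_prepend hrule
  intro w hw
  obtain ⟨v, hv, hprod⟩ := (hsound hw).exists_prod_eq rfl
  have := Trace.derives hv 1
  rwa [hprod, List.prod_nil, one_mul] at this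

section FiniteGroup

variable {H : Type} [Group H] [Finite H] {G : CFValenceGrammar T H}

theorem exists_annotate_derives {w : List T} {α : List (G.NT ⊕ T)} {m m' : H}
    (h : G.Derives (α, m) (w.map .inr, m')) :
    ∃ α' : List (Symbol T (G.NT × ShortWord H (Nat.card (H × H)))),
      α'.map unannotate = α ∧ (∃ s ∈ annotationWords α', m * s.prod = m') ∧
        (G.annotate (Nat.card (H × H))).Derives α' (w.map .terminal) := by
  generalize hx : (α, m) = x at h
  induction h using Relation.ReflTransGen.head_induction_on generalizing α m with
  | refl =>
    cases hx
    refine ⟨w.map .terminal, by simp [unannotate], ⟨[], ?_, by simp⟩,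
      Relation.ReflTransGen.refl⟩
    rw [annotationWords_terminals]
    rfl
  | head hstep _ ih =>
    subst hx
    obtain ⟨⟨A, γ, k⟩, hr, p, q, rfl, hβ, hk⟩ := hstep
    obtain ⟨β', hβ', ⟨s, hs, hprod⟩, hder⟩ := ih rfl
    obtain ⟨pγ', q', rfl, hpγ', rfl⟩ := List.map_eq_append_iff.1 (hβ'.trans hβ)
    obtain ⟨p', γ', rfl, rfl, rfl⟩ := List.map_eq_append_iff.1 hpγ'
    obtain ⟨v, hv, z, hz, hvz⟩ : s ∈ annotationWords γ' * annotationWords (p' ++ q') := by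
      simpa [mul_left_comm, mul_assoc] using hs
    obtain ⟨u, hu, hsim, y, hy, hyprod⟩ := (Shuffle.left k hvz).exists_short_simulatedBy
    refine ⟨p' ++ .nonterminal (A, ⟨u, hu⟩) :: q', by simp [unannotate], ⟨y, ?_, ?_⟩, ?_⟩
    · have : y ∈ {u} * annotationWords (p' ++ q') := ⟨u, rfl, z, hz, hy⟩
      simpa [mul_left_comm] using this
    · rw [hyprod, List.prod_cons, ← mul_assoc, ← hprod, hk]
    · refine Relation.ReflTransGen.head ⟨⟨(A, ⟨u, hu⟩), γ'⟩,
        (Set.Finite.mem_toFinset _).2 ⟨k, hr, hsim.trans ?_⟩, ?_⟩ hder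
      · exact .of_forall_mem fun x hx => ⟨v, hv, hx⟩
      · exact ContextFreeRule.rewrites_iff.2 ⟨p', q', List.append_cons .., rfl⟩

theorem lang_le_language_annotate :
    G.lang ≤ (G.annotate (Nat.card (H × H))).language := by
  intro w hw
  obtain heq | ⟨⟨β, m⟩, ⟨⟨A, γ, k⟩, hr, p, q, hstart, hβ, hm⟩, hder⟩ :=
    Relation.ReflTransGen.cases_head hw
  · cases w <;> simp at heq
  obtain ⟨rfl, hA, rfl⟩ : p = [] ∧ A = G.start ∧ q = [] := by
    cases p <;> simp_all
  subst hA
  obtain ⟨γ', hγ', ⟨s, hs, hprod⟩, hder⟩ := exists_annotate_derives hder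
  replace hβ : β = γ := by simpa using hβ
  simp only [one_mul] at hm
  refine Relation.ReflTransGen.head ⟨⟨(G.start, ⟨[], Nat.zero_le _⟩), γ'⟩,
    (Set.Finite.mem_toFinset _).2 ⟨k, by simpa [hγ', hβ] using hr, ?_⟩, .input_output⟩ hder
  have hks : (k :: s).prod = 1 := by rw [List.prod_cons, ← hprod, hm]
  have hsim : ShuffleLang.SimulatedBy {[]} {k :: s} := by
    simpa using ShuffleLang.SimulatedBy.insert_of_prod_eq_one hks [] []
  exact hsim.trans (.of_forall_mem fun x hx => ⟨s, hs, hx⟩)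

theorem isContextFree_lang (G : CFValenceGrammar T H) : G.lang.IsContextFree :=
  ⟨G.annotate _, le_antisymm (G.language_annotate_le _) lang_le_language_annotate⟩

end FiniteGroup

/-! ### Changing the valence monoid -/

variable {F M' : Type} [Monoid F] [Monoid M']

/-- Applies `f` to the valence of every rule. -/
abbrev mapValence (f : M → M') (G : CFValenceGrammar T M) : CFValenceGrammar T M' where
  NT := G.NT
  fintypeNT := G.fintypeNT
  start := G.start
  rules := G.rules.map fun r => (r.1, r.2.1, f r.2.2)

variable {G : CFValenceGrammar T M}

theorem Derives.mapValence {x y : List (G.NT ⊕ T) × M} (f : M →* M') (h : G.Derives x y) :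
    (G.mapValence f).Derives (x.1, f x.2) (y.1, f y.2) := by
  refine Relation.ReflTransGen.lift (fun x : List (G.NT ⊕ T) × M => (x.1, f x.2)) ?_ _ _ h
  rintro x y ⟨r, hr, p, q, hx, hy, hm⟩
  exact ⟨_, List.mem_map_of_mem hr, p, q, hx, hy, by simp [hm]⟩

theorem exists_derives_of_mapValence {f : M →* M'} {α : List (G.NT ⊕ T)} {m : M}
    {y : List (G.NT ⊕ T) × M'} (h : (G.mapValence f).Derives (α, f m) y) :
    ∃ m', f m' = y.2 ∧ G.Derives (α, m) (y.1, m') := by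
  induction h with
  | refl => exact ⟨m, rfl, .refl⟩
  | tail _ hstep ih =>
    obtain ⟨m', hm', hder⟩ := ih
    obtain ⟨_, hr, p, q, hx, hy, hm⟩ := hstep
    obtain ⟨r, hrG, rfl⟩ := List.mem_map.1 hr
    exact ⟨m' * r.2.2, by rw [map_mul, hm', hm], hder.tail ⟨r, hrG, p, q, hx, hy, rfl⟩⟩

theorem mem_lang_mapValence (f : M →* M') {w : List T} :
    w ∈ (G.mapValence f).lang ↔
      ∃ m, f m = 1 ∧ G.Derives ([.inl G.start], 1) (w.map .inr, m) := by
  constructor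
  · intro h
    exact exists_derives_of_mapValence (f := f) (m := 1) (by rw [map_one]; exact h)
  · rintro ⟨m, hm, h⟩
    have := h.mapValence f
    rwa [map_one, hm] at this

theorem exists_mapValence_eq {f : M → M'} (G : CFValenceGrammar T M')
    (hG : ∀ r ∈ G.rules, r.2.2 ∈ Set.range f) : ∃ G', mapValence f G' = G := by
  obtain ⟨N, hN, S, R⟩ := G
  let F (r : N × List (N ⊕ T) × M) : N × List (N ⊕ T) × M' := (r.1, r.2.1, f r.2.2)
  obtain ⟨R', rfl⟩ : R ∈ Set.range (List.map F) := by
    rw [Set.range_list_map]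
    intro r hr
    obtain ⟨m, hm⟩ := hG r hr
    exact ⟨(r.1, r.2.1, m), by simp [F, hm]⟩
  exact ⟨⟨N, hN, S, R'⟩, rfl⟩

theorem lang_mem_LValCF_of_eq_one_iff (G : CFValenceGrammar T M) (f : F →* M) (g : F →* M')
    (hfg : ∀ x, f x = 1 ↔ g x = 1) (hG : ∀ r ∈ G.rules, r.2.2 ∈ Set.range f) :
    G.lang ∈ LValCF T M' := by
  obtain ⟨G', rfl⟩ := exists_mapValence_eq G hG
  refine ⟨G'.mapValence g, Set.ext fun w => ?_⟩
  exact (mem_lang_mapValence g).trans <|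
    (exists_congr fun m => and_congr_left fun _ => (hfg m).symm).trans (mem_lang_mapValence f).symm

open Classical in
/-- Keeps only the rules whose valence satisfies `p`. -/
noncomputable abbrev filterValence (p : M → Prop) (G : CFValenceGrammar T M) :
    CFValenceGrammar T M where
  NT := G.NT
  fintypeNT := G.fintypeNT
  start := G.start
  rules := G.rules.filter fun r => p r.2.2

theorem Derives.filterValence {p : M → Prop} (hp : ∀ a b, p (a * b) → p a ∧ p b)
    {x y : List (G.NT ⊕ T) × M} (h : G.Derives x y) (hy : p y.2) :
    (G.filterValence p).Derives x y := by
  induction h with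
  | refl => exact .refl
  | tail _ hstep ih =>
    obtain ⟨r, hr, u, v, hx, hy', hm⟩ := hstep
    obtain ⟨hleft, hright⟩ := hp _ _ (hm ▸ hy)
    exact (ih hleft).tail ⟨r, by simpa using ⟨hr, hright⟩, u, v, hx, hy', hm⟩

theorem lang_filterValence {p : M → Prop} (hone : p 1) (hp : ∀ a b, p (a * b) → p a ∧ p b)
    (G : CFValenceGrammar T M) : (G.filterValence p).lang = G.lang := by
  refine Set.ext fun w => ⟨fun h => ?_, fun h => h.filterValence hp hone⟩
  refine Relation.ReflTransGen.mono (fun x y => ?_) _ _ h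
  rintro ⟨r, hr, hxy⟩
  exact ⟨r, List.mem_of_mem_filter hr, hxy⟩

end CFValenceGrammar

section

variable {T M M' : Type} [Monoid M] [Monoid M']

theorem LValCF_subset_of_injective (f : M →* M') (hf : Function.Injective f) :
    LValCF T M ⊆ LValCF T M' := by
  rintro _ ⟨G, rfl⟩
  exact G.lang_mem_LValCF_of_eq_one_iff (MonoidHom.id M) f
    (fun x => (map_eq_one_iff f hf).symm) fun r _ => ⟨r.2.2, rfl⟩

theorem LValCF_eq_LValCF_units [IsDedekindFiniteMonoid M] : LValCF T M = LValCF T Mˣ := by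
  refine Set.Subset.antisymm ?_ (LValCF_subset_of_injective (Units.coeHom M) Units.val_injective)
  rintro _ ⟨G, rfl⟩
  rw [← G.lang_filterValence isUnit_one fun a b => IsUnit.mul_iff.1]
  refine CFValenceGrammar.lang_mem_LValCF_of_eq_one_iff _ (Units.coeHom M) (MonoidHom.id Mˣ)
    (fun x => Units.val_eq_one) fun r hr => ?_
  have hunit : IsUnit r.2.2 := by simpa using List.of_mem_filter hr
  exact hunit

theorem isContextFree_of_mem_LValCF {H : Type} [Group H]
    (hH : ∀ K : Subgroup H, K.FG → Finite K) {L : Language T} (hL : L ∈ LValCF T H) :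
    L.IsContextFree := by
  obtain ⟨G, rfl⟩ := hL
  let valences : Set H := (fun r => r.2.2) '' {r | r ∈ G.rules}
  let K := Subgroup.closure valences
  have : Finite K :=
    hH K ((Subgroup.fg_iff K).2 ⟨valences, rfl, G.rules.finite_toSet.image _⟩)
  obtain ⟨G', hG'⟩ := G.lang_mem_LValCF_of_eq_one_iff K.subtype (MonoidHom.id K) (fun x => by simp)
    fun r hr => ⟨⟨r.2.2, Subgroup.subset_closure ⟨r, hr, rfl⟩⟩, rfl⟩
  exact hG' ▸ G'.isContextFree_lang

theorem LValCF_int_subset {g : M'ˣ} (hg : ¬IsOfFinOrder g) :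
    LValCF T (Multiplicative ℤ) ⊆ LValCF T M' :=
  LValCF_subset_of_injective ((Units.coeHom M').comp (zpowersHom M'ˣ g)) <|
    Units.val_injective.comp (injective_zpow_iff_not_isOfFinOrder.2 hg)

end

/-! ### The bicyclic monoid -/

section Bicyclic

theorem pow_mul_pow_eq_one_iff {M : Type*} [Monoid M] {a b : M} (hab : a * b = 1)
    (hba : b * a ≠ 1) {i j : ℕ} : b ^ i * a ^ j = 1 ↔ i = 0 ∧ j = 0 := by
  refine ⟨fun h => ⟨?_, ?_⟩, by rintro ⟨rfl, rfl⟩; simp⟩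
  · by_contra hi
    obtain ⟨i, rfl⟩ := Nat.exists_eq_succ_of_ne_zero hi
    rw [pow_succ', mul_assoc] at h
    exact hba (left_inv_eq_right_inv hab h ▸ h)
  · by_contra hj
    obtain ⟨j, rfl⟩ := Nat.exists_eq_succ_of_ne_zero hj
    rw [pow_succ, ← mul_assoc] at h
    exact hba (left_inv_eq_right_inv h hab ▸ h)

theorem exists_lift_eq_pow_mul_pow (x : FreeMonoid Bool) :
    ∃ i j : ℕ, ∀ (M : Type) [Monoid M] (a b : M), a * b = 1 →
      FreeMonoid.lift (fun c => cond c a b) x = b ^ i * a ^ j := by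
  induction x using FreeMonoid.inductionOn' with
  | one => exact ⟨0, 0, by simp⟩
  | of_mul c x ih =>
    obtain ⟨i, j, h⟩ := ih
    match c, i with
    | false, i => exact ⟨i + 1, j, fun M _ a b hab => by simp [h M a b hab, pow_succ', mul_assoc]⟩
    | true, 0 => exact ⟨0, j + 1, fun M _ a b hab => by simp [h M a b hab, pow_succ']⟩
    | true, i + 1 =>
      exact ⟨i, j, fun M _ a b hab => by simp [h M a b hab, pow_succ', ← mul_assoc, hab]⟩

variable {T B M : Type} [Monoid B] [Monoid M]

theorem LValCF_subset_of_closure_eq_top {q p : B} (hqp : q * p = 1) (hpq : p * q ≠ 1)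
    (hgen : Submonoid.closure {q, p} = ⊤) {a b : M} (hab : a * b = 1) (hba : b * a ≠ 1) :
    LValCF T B ⊆ LValCF T M := by
  rintro _ ⟨G, rfl⟩
  let f : FreeMonoid Bool →* B := FreeMonoid.lift fun c => cond c q p
  have hf : MonoidHom.mrange f = ⊤ := by
    rw [FreeMonoid.mrange_lift, ← hgen, Bool.range_eq, Set.pair_comm]
    rfl
  refine G.lang_mem_LValCF_of_eq_one_iff f (FreeMonoid.lift fun c => cond c a b) (fun x => ?_)
    fun r _ => MonoidHom.mrange_eq_top.1 hf r.2.2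
  obtain ⟨i, j, h⟩ := exists_lift_eq_pow_mul_pow x
  rw [h B q p hqp, h M a b hab, pow_mul_pow_eq_one_iff hqp hpq, pow_mul_pow_eq_one_iff hab hba]

theorem LValCF_bicyclicMonoid_subset {a b : M} (hab : a * b = 1) (hba : b * a ≠ 1) :
    LValCF T BicyclicMonoid ⊆ LValCF T M := by
  let p : BicyclicMonoid := ⟨polyP (Fin 1) 0, Submonoid.subset_closure (Or.inl ⟨0, rfl⟩)⟩
  let q : BicyclicMonoid := ⟨polyQ (Fin 1) 0, Submonoid.subset_closure (Or.inr ⟨0, rfl⟩)⟩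
  have hqp : q * p = 1 := by
    refine Subtype.ext (funext fun u => ?_)
    change polyQ (Fin 1) 0 (polyP (Fin 1) 0 u) = u
    cases u <;> simp [polyP, polyQ]
  have hpq : p * q ≠ 1 := by
    intro h
    have : polyP (Fin 1) 0 (polyQ (Fin 1) 0 (some [])) = some [] :=
      congrFun (congrArg Subtype.val h) (some [])
    simp [polyP, polyQ] at this
  have hgen : Submonoid.closure {q, p} = (⊤ : Submonoid BicyclicMonoid) := by
    refine eq_top_iff.2 <| Submonoid.closure_closure_coe_preimage.ge.trans <|
      Submonoid.closure_le.2 ?_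
    rintro ⟨_, _⟩ (⟨c, rfl⟩ | ⟨c, rfl⟩) <;> obtain rfl : c = 0 := Subsingleton.elim c 0
    · exact Submonoid.subset_closure (Or.inr rfl)
    · exact Submonoid.subset_closure (Or.inl rfl)
  exact LValCF_subset_of_closure_eq_top hqp hpq hgen hab hba

end Bicyclic

/-! ### Context-free languages -/

namespace CFValenceGrammar

variable {T : Type}

/-- Replaces a nonterminal by the set of rules that apply to it. This makes the nonterminals of a
Mathlib grammar, of which there may be infinitely many, finite in number, and it identifies only
nonterminals to which no rule applies. -/
def abstractSymbol (g : ContextFreeGrammar T) : Symbol T g.NT → Set g.rules ⊕ T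
  | .nonterminal A => .inl {r | r.1.input = A}
  | .terminal t => .inr t

theorem eq_of_abstractSymbol_eq {g : ContextFreeGrammar T} {r : ContextFreeRule T g.NT}
    (hr : r ∈ g.rules) {c : Symbol T g.NT}
    (h : abstractSymbol g c = abstractSymbol g (.nonterminal r.input)) :
    c = .nonterminal r.input := by
  cases c with
  | terminal t => cases h
  | nonterminal A =>
    have hmem : (⟨r, hr⟩ : g.rules) ∈ {r : g.rules | r.1.input = A} := by
      rw [Sum.inl.inj h]
      rfl
    exact congrArg Symbol.nonterminal hmem.symm

theorem eq_map_terminal_of_map_abstractSymbol {g : ContextFreeGrammar T} {w : List T}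
    {α : List (Symbol T g.NT)} (h : α.map (abstractSymbol g) = w.map .inr) :
    α = w.map .terminal := by
  induction w generalizing α with
  | nil => exact List.map_eq_nil_iff.1 h
  | cons t w ih =>
    obtain ⟨c, α, rfl, hc, hα⟩ := List.map_eq_cons_iff.1 h
    rw [ih hα]
    cases c with
    | terminal s => rw [Sum.inr.inj hc, List.map_cons]
    | nonterminal A => cases hc

variable (M : Type) [Monoid M]

/-- A context-free grammar as a valence grammar in which every valence is `1`. -/
noncomputable abbrev ofContextFree (g : ContextFreeGrammar T) : CFValenceGrammar T M where
  NT := Set g.rules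
  fintypeNT := Fintype.ofFinite _
  start := {r | r.1.input = g.initial}
  rules := g.rules.toList.map fun r =>
    ({s | s.1.input = r.input}, r.output.map (abstractSymbol g), 1)

variable {M} {g : ContextFreeGrammar T}

theorem derives_ofContextFree {α β : List (Symbol T g.NT)} (h : g.Derives α β) :
    (ofContextFree M g).Derives (α.map (abstractSymbol g), 1) (β.map (abstractSymbol g), 1) := by
  refine Relation.ReflTransGen.lift
    (fun α : List (Symbol T g.NT) => (α.map (abstractSymbol g), (1 : M))) ?_ _ _ h
  rintro _ _ ⟨r, hr, hrw⟩
  obtain ⟨p, q, rfl, rfl⟩ := hrw.exists_parts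
  exact ⟨_, List.mem_map_of_mem (Finset.mem_toList.2 hr), p.map (abstractSymbol g),
    q.map (abstractSymbol g), by simp [abstractSymbol], by simp, (one_mul 1).symm⟩

theorem exists_derives_of_ofContextFree {α : List (Symbol T g.NT)} {m : M}
    {y : List (Set g.rules ⊕ T) × M}
    (h : (ofContextFree M g).Derives (α.map (abstractSymbol g), m) y) :
    ∃ β, β.map (abstractSymbol g) = y.1 ∧ g.Derives α β := by
  induction h with
  | refl => exact ⟨α, rfl, Relation.ReflTransGen.refl⟩
  | tail _ hstep ih =>
    obtain ⟨β, hβ, hder⟩ := ih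
    obtain ⟨_, hr, p, q, hx, hy, -⟩ := hstep
    obtain ⟨r, hrg, rfl⟩ := List.mem_map.1 hr
    rw [Finset.mem_toList] at hrg
    obtain ⟨p', _, rfl, rfl, hβ⟩ := List.map_eq_append_iff.1 (hβ.trans hx)
    obtain ⟨c, q', rfl, hc, rfl⟩ := List.map_eq_cons_iff.1 hβ
    obtain rfl := eq_of_abstractSymbol_eq hrg hc
    refine ⟨p' ++ r.output ++ q', by simp [hy, List.append_assoc], hder.tail ⟨r, hrg, ?_⟩⟩
    exact ContextFreeRule.rewrites_iff.2 ⟨p', q', List.append_cons .., rfl⟩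

theorem lang_ofContextFree : (ofContextFree M g).lang = g.language := by
  refine Set.ext fun w => ⟨fun h => ?_, fun h => ?_⟩
  · obtain ⟨β, hβ, hder⟩ := exists_derives_of_ofContextFree (α := [.nonterminal g.initial]) h
    rwa [eq_map_terminal_of_map_abstractSymbol hβ] at hder
  · have := derives_ofContextFree (M := M) h
    rwa [List.map_map] at this

end CFValenceGrammar

theorem mem_LValCF_of_isContextFree {T M : Type} [Monoid M] {L : Language T}
    (hL : L.IsContextFree) : L ∈ LValCF T M := by
  obtain ⟨g, rfl⟩ := hL
  exact ⟨.ofContextFree M g, CFValenceGrammar.lang_ofContextFree⟩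

/-- For every monoid `M`, at least one of the following holds:
(i) `𝔏(Val, CF, M)` is the class of context-free languages;
(ii) `𝔏(Val, CF, M)` contains `𝔏(Val, CF, B)` where `B` is the bicyclic monoid;
(iii) `𝔏(Val, CF, M)` contains `𝔏(Val, CF, ℤ)`;
(iv) `𝔏(Val, CF, M) = 𝔏(Val, CF, G)` for some infinite periodic group `G` that is not
locally finite. -/
theorem LValCF_tetrachotomy (M : Type) [Monoid M] :
    (∀ (T : Type) (L : Language T), L ∈ LValCF T M ↔ L.IsContextFree) ∨
    (∀ T : Type, LValCF T BicyclicMonoid ⊆ LValCF T M) ∨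
    (∀ T : Type, LValCF T (Multiplicative ℤ) ⊆ LValCF T M) ∨
    (∃ (G : Type) (_i : Group G),
      Infinite G ∧ (∀ g : G, ∃ n : ℕ, 0 < n ∧ g ^ n = 1) ∧
        ¬ (∀ H : Subgroup G, H.FG → Finite H) ∧
        ∀ T : Type, LValCF T M = LValCF T G) := by
  by_cases hM : IsDedekindFiniteMonoid M
  swap
  · rw [isDedekindFiniteMonoid_iff] at hM
    push Not at hM
    obtain ⟨a, b, hab, hba⟩ := hM
    exact .inr (.inl fun T => LValCF_bicyclicMonoid_subset hab hba)
  by_cases hperiodic : ∀ g : Mˣ, IsOfFinOrder g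
  swap
  · push Not at hperiodic
    obtain ⟨g, hg⟩ := hperiodic
    exact .inr (.inr (.inl fun T => LValCF_int_subset hg))
  by_cases hfin : ∀ H : Subgroup Mˣ, H.FG → Finite H
  · refine .inl fun T L => ⟨fun hL => ?_, mem_LValCF_of_isContextFree⟩
    rw [LValCF_eq_LValCF_units] at hL
    exact isContextFree_of_mem_LValCF hfin hL
  · have hinf : Infinite Mˣ := by
      by_contra h
      rw [not_infinite_iff_finite] at h
      exact hfin fun H _ => inferInstance
    exact .inr (.inr (.inr ⟨Mˣ, inferInstance, hinf,
      fun g => isOfFinOrder_iff_pow_eq_one.1 (hperiodic g), hfin, fun T => LValCF_eq_LValCF_units⟩))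
end

section
/- Let M be a commutative monoid. Then there exists a group G such that 𝔏(Val,CF,M) = 𝔏(Val,CF,G). -/
/-!
In a commutative monoid, or more generally a Dedekind-finite one, the factors of a unit are units.
Hence every rule applied in a valid derivation has a unit as its valence, and so has every
intermediate accumulated product: discarding the other rules turns a grammar over `M` into one over
the group `Mˣ` with the same language. Conversely a grammar over `Mˣ` is a grammar over `M`. Both
directions work for any injective homomorphism with saturated range in place of `Mˣ → M`.
-/

namespace CFValenceGrammar

variable {T M N : Type} [Monoid M] [Monoid N]

/-- The grammar over `N` obtained by applying a monoid homomorphism to all valences. -/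
def map (f : M →* N) (G : CFValenceGrammar T M) : CFValenceGrammar T N where
  NT := G.NT
  fintypeNT := G.fintypeNT
  start := G.start
  rules := G.rules.map fun r ↦ (r.1, r.2.1, f r.2.2)

/-- The pullback of a grammar over `N` along an injective homomorphism: valences in the range of `f`
are replaced by their preimages, and rules with any other valence are discarded. -/
noncomputable def comap (f : M →* N) (G : CFValenceGrammar T N) : CFValenceGrammar T M where
  NT := G.NT
  fintypeNT := G.fintypeNT
  start := G.start
  rules := G.rules.filterMap fun r ↦ (Function.partialInv f r.2.2).map fun m ↦ (r.1, r.2.1, m)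

variable {f : M →* N}

theorem comap_map (hf : Function.Injective f) (G : CFValenceGrammar T M) :
    (G.map f).comap f = G := by
  simp [comap, map, List.filterMap_map, Function.partialInv_left hf]

section Comap

variable {G : CFValenceGrammar T N}

theorem mem_rules_comap (hf : Function.Injective f) {A : G.NT} {α : List (G.NT ⊕ T)} {m : M} :
    (A, α, m) ∈ (G.comap f).rules ↔ (A, α, f m) ∈ G.rules := by
  refine List.mem_filterMap.trans ⟨?_, fun hr ↦ ⟨_, hr, ?_⟩⟩
  · rintro ⟨⟨B, β, n⟩, hr, heq⟩
    obtain ⟨m', hm', heq⟩ := Option.map_eq_some_iff.mp heq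
    obtain rfl : f m' = n := (hf.isPartialInv m' n).mp hm'
    cases heq
    exact hr
  · simp only [Function.partialInv_left hf, Option.map_some]

theorem produces_comap_iff (hf : Function.Injective f) (hsat : (MonoidHom.mrange f).MulSaturated)
    {x y : List (G.NT ⊕ T)} {a b : M} :
    (G.comap f).Produces (x, a) (y, b) ↔ G.Produces (x, f a) (y, f b) := by
  constructor
  · rintro ⟨⟨A, α, m⟩, hr, u, v, hx, hy, hb : b = a * m⟩
    exact ⟨(A, α, f m), (mem_rules_comap hf).mp hr, u, v, hx, hy, hb ▸ map_mul f a m⟩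
  · rintro ⟨⟨A, α, n⟩, hr, u, v, hx, hy, hb : f b = f a * n⟩
    obtain ⟨m, rfl⟩ : n ∈ MonoidHom.mrange f := (hsat (x := f a) ⟨b, hb⟩).2
    exact ⟨(A, α, m), (mem_rules_comap hf).mpr hr, u, v, hx, hy,
      hf (hb.trans (map_mul f a m).symm)⟩

theorem Produces.valence_mem_of_mulSaturated {S : Submonoid N} (hS : S.MulSaturated)
    {x y : List (G.NT ⊕ T) × N} (h : G.Produces x y) (hy : y.2 ∈ S) : x.2 ∈ S := by
  obtain ⟨_, -, _, _, -, -, hval⟩ := h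
  exact (hS (hval ▸ hy)).1

theorem derives_comap_iff (hf : Function.Injective f) (hsat : (MonoidHom.mrange f).MulSaturated)
    {x y : List (G.NT ⊕ T)} {a b : M} :
    (G.comap f).Derives (x, a) (y, b) ↔ G.Derives (x, f a) (y, f b) := by
  constructor
  · exact Relation.ReflTransGen.lift (Prod.map id f)
      (fun _ _ h ↦ (produces_comap_iff hf hsat).mp h) _ _
  · intro h
    generalize hz : (y, f b) = z at h
    induction h generalizing y b with
    | refl =>
      obtain ⟨rfl, hab⟩ := Prod.mk.inj hz
      exact hf hab ▸ .refl
    | @tail w _ _ hstep ih =>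
      subst hz
      obtain ⟨w, n⟩ := w
      obtain ⟨c, rfl⟩ : n ∈ MonoidHom.mrange f := hstep.valence_mem_of_mulSaturated hsat ⟨b, rfl⟩
      exact (ih rfl).tail ((produces_comap_iff hf hsat).mpr hstep)

theorem lang_comap (hf : Function.Injective f) (hsat : (MonoidHom.mrange f).MulSaturated) :
    (G.comap f).lang = G.lang := by
  ext w
  have h := derives_comap_iff (G := G) hf hsat
    (x := [Sum.inl G.start]) (y := w.map Sum.inr) (a := 1) (b := 1)
  rw [map_one] at h
  exact h

end Comap

end CFValenceGrammar

theorem LValCF_eq_of_mulSaturated_mrange (T : Type) {M N : Type} [Monoid M] [Monoid N]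
    {f : M →* N} (hf : Function.Injective f) (hsat : (MonoidHom.mrange f).MulSaturated) :
    LValCF T N = LValCF T M := by
  apply Set.Subset.antisymm
  · rintro _ ⟨G, rfl⟩
    exact ⟨G.comap f, CFValenceGrammar.lang_comap hf hsat⟩
  · rintro _ ⟨G, rfl⟩
    refine ⟨G.map f, ?_⟩
    rw [← CFValenceGrammar.lang_comap hf hsat, CFValenceGrammar.comap_map hf]

theorem mulSaturated_mrange_unitsCoeHom (M : Type*) [Monoid M] [IsDedekindFiniteMonoid M] :
    (MonoidHom.mrange (Units.coeHom M)).MulSaturated :=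
  fun _ _ h ↦ IsUnit.mul_iff.mp h

theorem LValCF_comm_eq_group_general (M : Type) [Monoid M] [IsDedekindFiniteMonoid M] (T : Type) :
    LValCF T M = LValCF T Mˣ :=
  LValCF_eq_of_mulSaturated_mrange T Units.val_injective (mulSaturated_mrange_unitsCoeHom M)

/-- Let `M` be a commutative monoid.  Then there exists a group `G`
with `𝔏(Val, CF, M) = 𝔏(Val, CF, G)` (over every terminal alphabet). -/
theorem LValCF_comm_eq_group (M : Type) [CommMonoid M] :
    ∃ (G : Type) (_i : Group G), ∀ T : Type, LValCF T M = LValCF T G :=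
  ⟨Mˣ, inferInstance, LValCF_comm_eq_group_general M⟩
end
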